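/- arXiv:2502.06071 — 3 statements merged into one kernel-verified Lean document; each statement's English description precedes it below -/
import Mathlib

section
/- Fix a constant δ with 0 < δ < min{ρ, 1−ρ}/(4Q). There exists a coupling P of two copies {ξ(t)} and {ξ̃(t)} of the load profile chain (each marginal evolves according to the load profile transition probabilities) with the following property: for each t ∈ ℤ₊, if ξ(t), ξ̃(t) ∈ Ξ(2δ) and D_t > 0, then almost surely, for each r ∈ {1, −1}, P( D_{t+1} − D_t = r | ξ(t), ξ̃(t) ) ≥ 1/(4Q²), and E[ D_{t+1} − D_t | ξ(t), ξ̃(t) ] ≤ 0. -/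
/-!
A transition from a profile `x` moves one unit from `u` to `v`, where the pair `(u, v)` is drawn
with weight `x_u (κ - x_v + [u = v])`; the pairs `(v, v)` account for the holding probability.
So it suffices to couple the pairs drawn by the two copies `x`, `y`.

*Base coupling* (`baseQ`). The removals `u, u'` are drawn from the maximal coupling `mc` of `x` and
`y`, and then the insertions `v, v'` from the maximal coupling of the two profiles of free slots.
A maximal coupling pairs distinct sites only if the first has an excess in the first copy and
the second an excess in the second copy, so neither step can increase the distance `D`
(`step_le`, `baseQ_supp`).

*Perturbation* (`pert`). If `D > 0`, choose `i` with `x_i > y_i` and `j` with `x_j < y_j`. The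
diagonal pairs of moves `(j → i, j → i)` and `(j → j, j → j)` are partly replaced by
`(j → i, j → j)` and `(j → j, j → i)`. This keeps both marginals; the new pairs change `D`
by `+1` and `-1` and receive equal mass, so the mean of `D` is unaffected. The same is done with `i`
and `j` exchanged. Near the uniform profile each exchange can carry the (unnormalised) mass
`κ² ρ (1 - ρ) / 4`, and the two together carry at least a fraction `1 / (4 Q²)` of the total
mass `n (1 + κ Q - n)` (`mass_bound`). The last estimate uses `κ (1 - ρ) > 1`, which
holds because two distinct profiles near the uniform one differ by at least one unit at some site.
-/

open scoped BigOperators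
open Filter MeasureTheory

noncomputable section

namespace CongestionPaper

attribute [local instance 10] Classical.propDecidable

/-- Evolution of a distribution under a transition kernel `p` on a finite state space:
`evolve p mu t` is the law at time `t` of the Markov chain with transition matrix `p`
and initial distribution `mu`. -/
def evolve {X : Type*} [Fintype X] (p : X -> X -> Real) (mu : X -> Real) : Nat -> X -> Real
  | 0 => mu
  | (t+1) => fun y => ∑ x, evolve p mu t x * p x y

/-- Point mass at `x0`. -/
def delta {X : Type*} (x0 : X) : X -> Real := fun x => if x = x0 then 1 else 0

/-- Total variation distance between two distributions on a finite type,
as the supremum over events `A` of the difference of probabilities of `A`. -/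
def tvDist {X : Type*} [Fintype X] (mu nu : X -> Real) : Real :=
  ⨆ A : Finset X, |∑ x ∈ A, (mu x - nu x)|

/-- Total variation distance between the pushforwards of `mu` and `nu` under `m`. -/
def tvDistOn {X : Type*} [Fintype X] {Y : Type*} (m : X -> Y) (mu nu : X -> Real) : Real :=
  ⨆ B : Finset Y, |∑ x : X, (if m x ∈ B then mu x - nu x else 0)|

/-- Worst-case (over the initial state) total variation distance to `pi` at time `t`. -/
def DTV {X : Type*} [Fintype X] (p : X -> X -> Real) (pi : X -> Real) (t : Nat) : Real :=
  ⨆ x0 : X, tvDist (evolve p (delta x0) t) pi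

/-- Mixing time `T^mix(eps)`. -/
def Tmix {X : Type*} [Fintype X] (p : X -> X -> Real) (pi : X -> Real) (eps : Real) : Nat :=
  sInf {t : Nat | DTV p pi t ≤ eps}

/-- Probability of a given trajectory `w` of length `T` for the chain started at `x0`. -/
def pathProb {X : Type*} [Fintype X] (p : X -> X -> Real) (x0 : X) (T : Nat)
    (w : Fin (T+1) -> X) : Real :=
  (if w 0 = x0 then 1 else 0) * ∏ t : Fin T, p (w t.castSucc) (w t.succ)

/-- Probability that some state visited up to time `T` satisfies `Bad`. -/
def hitProb {X : Type*} [Fintype X] (p : X -> X -> Real) (x0 : X) (T : Nat)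
    (Bad : X -> Prop) : Real :=
  ∑ w : Fin (T+1) -> X, (if ∃ t, Bad (w t) then pathProb p x0 T w else 0)

/-! ### The load profile chain -/

/-- Load profiles: `xi : S -> {0,...,kappa}` with `∑ xi v = n`, where `S = Fin Q`. -/
abbrev LoadState (Q kap n : Nat) := {xi : Fin Q -> Fin (kap+1) // (∑ v, ((xi v : Nat))) = n}

/-- Transition matrix of the load profile chain on `Xi_{n,S,kappa}`. -/
def loadP (Q kap n : Nat) (xi xi' : LoadState Q kap n) : Real :=
  if xi' = xi then
    (∑ v, ((xi.1 v : Nat) : Real) * (((1 + kap - (xi.1 v : Nat) : Nat)) : Real))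
      / ((n : Real) * ((1 + kap * Q - n : Nat) : Real))
  else
    (∑ vm, ∑ vp,
      if vm ≠ vp ∧ (xi'.1 vm : Nat) + 1 = (xi.1 vm : Nat) ∧ (xi'.1 vp : Nat) = (xi.1 vp : Nat) + 1 ∧
          (∀ v, v ≠ vm -> v ≠ vp -> xi'.1 v = xi.1 v)
        then ((xi.1 vm : Nat) : Real) * (((kap - (xi.1 vp : Nat) : Nat)) : Real) else 0)
      / ((n : Real) * ((1 + kap * Q - n : Nat) : Real))

/-- Stationary weight `∏_v 1/(xi_v! (kappa - xi_v)!)`. -/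
def loadWeight (Q kap n : Nat) (xi : LoadState Q kap n) : Real :=
  ∏ v, (1 : Real) /
    ((Nat.factorial (xi.1 v : Nat) : Real) * (Nat.factorial (kap - (xi.1 v : Nat)) : Real))

/-- The stationary distribution `pi_n` of the load profile chain. -/
def loadPi (Q kap n : Nat) (xi : LoadState Q kap n) : Real :=
  loadWeight Q kap n xi / (∑ eta : LoadState Q kap n, loadWeight Q kap n eta)

/-- `xi ∈ Xi(delta)`: the normalized load profile is within Euclidean distance `delta`
of the constant vector `(rho/Q)_v`. -/
def loadNear (Q kap n : Nat) (rho : Real) (xi : LoadState Q kap n) (del : Real) : Prop :=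
  Real.sqrt (∑ v, (((xi.1 v : Nat) : Real) / ((kap * Q : Nat) : Real) - rho / (Q : Real))^2) ≤ del

/-- `D(xi, xi') = (1/2) ∑_v |xi_v - xi'_v|`. -/
def loadD (Q kap n : Nat) (xi xi' : LoadState Q kap n) : Real :=
  (1/2) * ∑ v, |((xi.1 v : Nat) : Real) - ((xi'.1 v : Nat) : Real)|

/-! ### The congestion dynamics (Glauber dynamics) -/

/-- `xi_v(sigma)`: the number of players adopting resource `v`. -/
def xiCount {Q n : Nat} (sg : Fin n -> Fin Q) (v : Fin Q) : Nat :=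
  (Finset.univ.filter fun i => sg i = v).card

/-- Configurations: `sigma : [n] -> S` with `xi_v(sigma) ≤ kappa` for every `v`. -/
abbrev ConfigState (Q kap n : Nat) := {sg : Fin n -> Fin Q // ∀ v, xiCount sg v ≤ kap}

/-- Transition matrix of the congestion dynamics. -/
def configP (Q kap n : Nat) (sg sg' : ConfigState Q kap n) : Real :=
  if sg' = sg then
    (∑ i, ((1 + kap - xiCount sg.1 (sg.1 i) : Nat) : Real))
      / ((n : Real) * ((1 + kap * Q - n : Nat) : Real))
  else
    (∑ i, if sg'.1 i ≠ sg.1 i ∧ (∀ j, j ≠ i -> sg'.1 j = sg.1 j)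
        then ((kap - xiCount sg.1 (sg'.1 i) : Nat) : Real) else 0)
      / ((n : Real) * ((1 + kap * Q - n : Nat) : Real))

/-- The potential `F(sigma) = ∑_v ∑_{s=0}^{xi_v(sigma)} (log(kappa+1) - log(kappa+1-s))`. -/
def potF (Q kap n : Nat) (sg : ConfigState Q kap n) : Real :=
  ∑ v, ∑ s ∈ Finset.range (xiCount sg.1 v + 1),
    (Real.log ((kap : Real) + 1) - Real.log ((kap : Real) + 1 - (s : Real)))

/-- The Gibbs measure `mu_n(sigma) = e^{-F(sigma)}/Z_n`. -/
def gibbs (Q kap n : Nat) (sg : ConfigState Q kap n) : Real :=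
  Real.exp (-(potF Q kap n sg)) / (∑ ta : ConfigState Q kap n, Real.exp (-(potF Q kap n ta)))

/-- `sigma ∈ S(delta)`. -/
def configNear (Q kap n : Nat) (rho : Real) (sg : ConfigState Q kap n) (del : Real) : Prop :=
  Real.sqrt (∑ v, ((xiCount sg.1 v : Real) / ((kap * Q : Nat) : Real) - rho / (Q : Real))^2) ≤ del

/-- The load matrix `xi^{sigma0}_{u,v}(sigma)`. -/
def ximat {Q n : Nat} (sg0 sg : Fin n -> Fin Q) (u v : Fin Q) : Nat :=
  (Finset.univ.filter fun i => sg0 i = u ∧ sg i = v).card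

/-- `sigma ∈ S(sigma0, delta)`: for each `u`, the normalized `u`-th row of the
load matrix is within Euclidean distance `delta` of the constant vector `(1/Q)_v`. -/
def configNearMat (Q kap n : Nat) (sg0 sg : ConfigState Q kap n) (del : Real) : Prop :=
  ∀ u, Real.sqrt
      (∑ v, ((ximat sg0.1 sg.1 u v : Real) / (xiCount sg0.1 u : Real) - 1 / (Q : Real))^2) ≤ del

/-- `D^{sigma0}(sigma, sigma') = ∑_u (1/2) ∑_v |xi^{sigma0}_{u,v}(sigma) - xi^{sigma0}_{u,v}(sigma')|`. -/
def matD (Q kap n : Nat) (sg0 sg sg' : ConfigState Q kap n) : Real :=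
  ∑ u, (1/2) * ∑ v, |(ximat sg0.1 sg.1 u v : Real) - (ximat sg0.1 sg'.1 u v : Real)|

/-- The constant `cStar = (sqrt Q/(1-rho) + rho/(2Q))^{1/2}`. -/
def cStar (Q : Nat) (rho : Real) : Real :=
  Real.sqrt (Real.sqrt (Q : Real) / (1 - rho) + rho / (2 * (Q : Real)))

/-! ### The base-exchange chain on `B^(Q)(n)` -/

/-- `B^(Q)(n) = {x ∈ Z_{≥0}^Q : ∑ x_i = n}`. -/
abbrev BState (Q n : Nat) := {x : Fin Q -> Fin (n+1) // (∑ i, ((x i : Nat))) = n}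

/-- Transition matrix of the base-exchange chain on `B^(Q)(n)`. -/
def baseP (Q n : Nat) (x y : BState Q n) : Real :=
  if y = x then
    ∑ i, (if 0 < (x.1 i : Nat) then (1 : Real) / ((Q : Real) * (Q : Real)) else (1 : Real) / (Q : Real))
  else
    ∑ i, ∑ j,
      if i ≠ j ∧ (y.1 i : Nat) + 1 = (x.1 i : Nat) ∧ (y.1 j : Nat) = (x.1 j : Nat) + 1 ∧
          (∀ v, v ≠ i -> v ≠ j -> y.1 v = x.1 v)
        then (1 : Real) / ((Q : Real) * (Q : Real)) else 0

/-- The lazy version of the base-exchange chain. -/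
def lazyBaseP (Q n : Nat) (x y : BState Q n) : Real :=
  (1/2) * (if y = x then 1 else 0) + (1/2) * baseP Q n x y

/-- The uniform distribution on `B^(Q)(n)`. -/
def unifB (Q n : Nat) (x : BState Q n) : Real := 1 / (Fintype.card (BState Q n) : Real)


/-! ### Maximal couplings of integer mass profiles -/

/-- The maximal coupling (unnormalised) of two integer mass profiles `a`, `b` of equal total mass:
the common part `min a b` sits on the diagonal, and the excesses are coupled independently. If
`a = b`, then the last term is `0 / 0 = 0`. -/
def mc {Q : Nat} (a b : Fin Q → ℤ) (u v : Fin Q) : ℝ :=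
  (if u = v then ((min (a u) (b u) : ℤ) : ℝ) else 0) +
    ((max (a u - b u) 0 : ℤ) : ℝ) * ((max (b v - a v) 0 : ℤ) : ℝ) /
      ((∑ k, max (a k - b k) 0 : ℤ) : ℝ)

lemma mc_nonneg {Q : Nat} (a b : Fin Q → ℤ) (ha : ∀ k, 0 ≤ a k) (hb : ∀ k, 0 ≤ b k)
    (u v : Fin Q) : 0 ≤ mc a b u v := by
  unfold mc
  have h1 : (0 : ℝ) ≤ (if u = v then ((min (a u) (b u) : ℤ) : ℝ) else 0) := by
    split_ifs
    · exact_mod_cast le_min (ha u) (hb u)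
    · exact le_rfl
  have h2 : (0 : ℝ) ≤ ((max (a u - b u) 0 : ℤ) : ℝ) := by exact_mod_cast le_max_right _ _
  have h3 : (0 : ℝ) ≤ ((max (b v - a v) 0 : ℤ) : ℝ) := by exact_mod_cast le_max_right _ _
  have h4 : (0 : ℝ) ≤ ((∑ k, max (a k - b k) 0 : ℤ) : ℝ) := by
    exact_mod_cast Finset.sum_nonneg (fun k _ => le_max_right _ _)
  positivity

lemma sum_excess {Q : Nat} (a b : Fin Q → ℤ) (hab : ∑ k, a k = ∑ k, b k) :
    ∑ k, max (b k - a k) 0 = ∑ k, max (a k - b k) 0 := by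
  have h : ∀ k, max (b k - a k) 0 = max (a k - b k) 0 + (b k - a k) := fun k => by omega
  simp only [h, Finset.sum_add_distrib, Finset.sum_sub_distrib, hab]
  ring

lemma mc_row {Q : Nat} (a b : Fin Q → ℤ) (hab : ∑ k, a k = ∑ k, b k) (u : Fin Q) :
    ∑ v, mc a b u v = a u := by
  unfold mc
  rw [Finset.sum_add_distrib, Finset.sum_ite_eq, ← Finset.sum_div, ← Finset.mul_sum,
    ← Int.cast_sum, sum_excess a b hab]
  simp only [Finset.mem_univ, if_true]
  by_cases hS : ∑ k, max (a k - b k) 0 = 0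
  · have := (Finset.sum_eq_zero_iff_of_nonneg (fun k _ => le_max_right _ _)).1 hS u
      (Finset.mem_univ u)
    rw [hS, this]
    simp only [Int.cast_zero, zero_mul, zero_div, add_zero]
    congr 1
    omega
  · rw [mul_div_assoc, div_self (by exact_mod_cast hS), mul_one]
    norm_cast
    omega

lemma mc_col {Q : Nat} (a b : Fin Q → ℤ) (hab : ∑ k, a k = ∑ k, b k) (v : Fin Q) :
    ∑ u, mc a b u v = b v := by
  have h : ∀ u, mc a b u v = mc b a v u := by
    intro u
    unfold mc
    rw [sum_excess b a hab.symm, mul_comm]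
    congr 1
    by_cases huv : u = v
    · subst huv; simp [min_comm]
    · simp [huv, Ne.symm huv]
  simp only [h]
  exact mc_row b a hab.symm v

lemma mc_supp {Q : Nat} (a b : Fin Q → ℤ) (u v : Fin Q) (h : mc a b u v ≠ 0) :
    u = v ∨ (b u < a u ∧ a v < b v) := by
  by_contra! hc
  obtain ⟨h1, h2⟩ := hc
  apply h
  unfold mc
  rw [if_neg h1]
  rcases le_or_gt (a u) (b u) with h3 | h3
  · rw [max_eq_right (by omega : a u - b u ≤ 0)]; simp
  · have := h2 h3
    rw [max_eq_right (by omega : b v - a v ≤ 0)]; simp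

lemma mc_diag {Q : Nat} (a b : Fin Q → ℤ) (u : Fin Q) :
    mc a b u u = ((min (a u) (b u) : ℤ) : ℝ) := by
  unfold mc
  rcases le_or_gt (a u) (b u) with h3 | h3
  · rw [max_eq_right (by omega : a u - b u ≤ 0)]; simp
  · rw [max_eq_right (by omega : b u - a u ≤ 0)]; simp

/-! ### The base coupling of moves -/

/-- Indicator of the site `u`. -/
def ind {Q : Nat} (u k : Fin Q) : ℤ := if k = u then 1 else 0

lemma sum_ind {Q : Nat} (u : Fin Q) : ∑ k, ind u k = 1 := by
  simp [ind]

/-- The unnormalised probability that a chain at `x` draws the move `m = (u, v)`. -/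
def mw {Q : Nat} (kap : Nat) (x : Fin Q → ℤ) (m : Fin Q × Fin Q) : ℝ :=
  (x m.1 : ℝ) * ((kap - x m.2 + ind m.1 m.2 : ℤ) : ℝ)

/-- Twice the distance between the profiles reached from `x` and `y` by the moves `m₁` and `m₂`,
as a function of the difference `d = x - y`. -/
def dm {Q : Nat} (d : Fin Q → ℤ) (m₁ m₂ : Fin Q × Fin Q) : ℤ :=
  ∑ k, |d k - ind m₁.1 k + ind m₂.1 k + ind m₁.2 k - ind m₂.2 k|

/-- The base coupling of moves: the removals are coupled maximally, then the insertions are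
coupled maximally given the removals. -/
def baseQ {Q : Nat} (kap : Nat) (x y : Fin Q → ℤ) (m₁ m₂ : Fin Q × Fin Q) : ℝ :=
  mc x y m₁.1 m₂.1 *
    mc (fun k => kap - x k + ind m₁.1 k) (fun k => kap - y k + ind m₂.1 k) m₁.2 m₂.2

/-- Moving a unit of discrepancy from an excess site to a deficit site does not increase the
`ℓ¹` norm. -/
lemma step_le {Q : Nat} (d : Fin Q → ℤ) (u u' : Fin Q)
    (h : u = u' ∨ (0 < d u ∧ d u' < 0)) :
    ∑ k, |d k - ind u k + ind u' k| ≤ ∑ k, |d k| := by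
  apply Finset.sum_le_sum
  intro k _
  unfold ind
  rcases h with rfl | ⟨h1, h2⟩
  · simp
  · by_cases hk : k = u
    · subst hk
      have : k ≠ u' := by rintro rfl; omega
      simp only [if_true, this, if_false]
      rw [abs_of_pos h1, abs_of_nonneg (by omega)]; omega
    · by_cases hk' : k = u'
      · subst hk'
        simp only [hk, if_true, if_false]
        rw [abs_of_neg h2, abs_of_nonpos (by omega)]; omega
      · simp [hk, hk']

lemma sum_slots {Q : Nat} (kap : Nat) (x y : Fin Q → ℤ) (hxy : ∑ k, x k = ∑ k, y k)
    (u u' : Fin Q) :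
    ∑ k, ((kap : ℤ) - x k + ind u k) = ∑ k, ((kap : ℤ) - y k + ind u' k) := by
  simp only [Finset.sum_add_distrib, Finset.sum_sub_distrib, sum_ind, hxy]

lemma baseQ_supp {Q : Nat} (kap : Nat) (x y : Fin Q → ℤ) (m m' : Fin Q × Fin Q)
    (h : baseQ kap x y m m' ≠ 0) :
    dm (fun k => x k - y k) m m' ≤ ∑ k, |x k - y k| := by
  unfold baseQ at h
  have h1 := mc_supp _ _ _ _ (left_ne_zero_of_mul h)
  have h2 := mc_supp _ _ _ _ (right_ne_zero_of_mul h)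
  have s1 := step_le (fun k => x k - y k) m.1 m'.1 (by
    rcases h1 with h | ⟨h, h'⟩
    · exact Or.inl h
    · right; constructor <;> omega)
  have s2 := step_le (fun k => x k - y k - ind m.1 k + ind m'.1 k) m'.2 m.2 (by
    rcases h2 with h | ⟨h, h'⟩
    · exact Or.inl h.symm
    · right; constructor <;> omega)
  refine le_trans (le_of_eq ?_) (s2.trans s1)
  unfold dm
  refine Finset.sum_congr rfl fun k _ => ?_
  congr 1
  ring

lemma baseQ_nonneg {Q : Nat} (kap : Nat) (x y : Fin Q → ℤ) (hx : ∀ k, 0 ≤ x k ∧ x k ≤ kap)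
    (hy : ∀ k, 0 ≤ y k ∧ y k ≤ kap) (m m' : Fin Q × Fin Q) : 0 ≤ baseQ kap x y m m' := by
  unfold baseQ
  have hi : ∀ u k : Fin Q, 0 ≤ ind u k := fun u k => by unfold ind; split_ifs <;> omega
  apply mul_nonneg
  · exact mc_nonneg _ _ (fun k => (hx k).1) (fun k => (hy k).1) _ _
  · refine mc_nonneg _ _ (fun k => ?_) (fun k => ?_) _ _
    · have := hx k; have := hi m.1 k; omega
    · have := hy k; have := hi m'.1 k; omega

lemma baseQ_row {Q : Nat} (kap : Nat) (x y : Fin Q → ℤ) (hxy : ∑ k, x k = ∑ k, y k)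
    (m : Fin Q × Fin Q) : ∑ m', baseQ kap x y m m' = mw kap x m := by
  unfold baseQ mw
  rw [Fintype.sum_prod_type]
  simp only [← Finset.mul_sum]
  simp only [mc_row _ _ (sum_slots kap x y hxy _ _), ← Finset.sum_mul, mc_row _ _ hxy]

lemma baseQ_col {Q : Nat} (kap : Nat) (x y : Fin Q → ℤ) (hxy : ∑ k, x k = ∑ k, y k)
    (m' : Fin Q × Fin Q) : ∑ m, baseQ kap x y m m' = mw kap y m' := by
  unfold baseQ mw
  rw [Fintype.sum_prod_type]
  simp only [← Finset.mul_sum]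
  simp only [mc_col _ _ (sum_slots kap x y hxy _ _), ← Finset.sum_mul, mc_col _ _ hxy]

lemma baseQ_diag {Q : Nat} (kap : Nat) (x y : Fin Q → ℤ) (m : Fin Q × Fin Q) :
    baseQ kap x y m m = ((min (x m.1) (y m.1) : ℤ) : ℝ) *
      ((min (kap - x m.2 + ind m.1 m.2) (kap - y m.2 + ind m.1 m.2) : ℤ) : ℝ) := by
  unfold baseQ
  rw [mc_diag, mc_diag]

/-! ### The perturbation -/

/-- Mass exchange between moves `m`, `s`: mass `c` is taken from the pairs `(m, m)` and `(s, s)`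
and given to `(m, s)` and `(s, m)`. -/
def pert {Q : Nat} (c : ℝ) (m s : Fin Q × Fin Q) (a b : Fin Q × Fin Q) : ℝ :=
  c * ((if a = m then 1 else 0) - (if a = s then 1 else 0)) *
    ((if b = s then 1 else 0) - (if b = m then 1 else 0))

lemma pert_row {Q : Nat} (c : ℝ) (m s a : Fin Q × Fin Q) : ∑ b, pert c m s a b = 0 := by
  unfold pert
  rw [← Finset.mul_sum]
  simp [Finset.sum_sub_distrib]

lemma pert_col {Q : Nat} (c : ℝ) (m s b : Fin Q × Fin Q) : ∑ a, pert c m s a b = 0 := by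
  unfold pert
  rw [← Finset.sum_mul, ← Finset.mul_sum]
  simp [Finset.sum_sub_distrib]

lemma pert_sum {Q : Nat} (c : ℝ) (m s : Fin Q × Fin Q) (f : Fin Q × Fin Q → Fin Q × Fin Q → ℝ) :
    ∑ a, ∑ b, pert c m s a b * f a b = c * (f m s + f s m - f m m - f s s) := by
  unfold pert
  have : ∀ a b, c * ((if a = m then (1 : ℝ) else 0) - (if a = s then 1 else 0)) *
      ((if b = s then 1 else 0) - (if b = m then 1 else 0)) * f a b =
      (if a = m then (if b = s then c * f a b else 0) else 0)
      - (if a = m then (if b = m then c * f a b else 0) else 0)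
      - (if a = s then (if b = s then c * f a b else 0) else 0)
      + (if a = s then (if b = m then c * f a b else 0) else 0) := by
    intro a b
    split_ifs <;> ring
  simp only [this, Finset.sum_add_distrib, Finset.sum_sub_distrib]
  have h2 : ∀ p q : Fin Q × Fin Q,
      ∑ a, ∑ b, (if a = p then (if b = q then c * f a b else 0) else 0) = c * f p q := by
    intro p q
    rw [Finset.sum_eq_single p]
    · simp
    · intro a _ ha; simp [ha]
    · simp
  simp only [h2]
  ring

/-- Off the two diagonal points `(m, m)` and `(s, s)` the exchange is nonnegative. -/
lemma pert_lower {Q : Nat} (c : ℝ) (hc : 0 ≤ c) (m s a b : Fin Q × Fin Q) :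
    -(if a = b ∧ (a = m ∨ a = s) then c else 0) ≤ pert c m s a b := by
  unfold pert
  by_cases h1 : a = m <;> by_cases h2 : a = s <;> by_cases h3 : b = m <;> by_cases h4 : b = s <;>
    simp_all [eq_comm]

lemma pert_at {Q : Nat} (c : ℝ) (m s : Fin Q × Fin Q) (h : m ≠ s) :
    pert c m s m s = c ∧ pert c m s s m = c := by
  unfold pert
  simp [h, h.symm]

lemma dm_diag {Q : Nat} (d : Fin Q → ℤ) (m : Fin Q × Fin Q) : dm d m m = ∑ k, |d k| := by
  unfold dm
  refine Finset.sum_congr rfl fun k _ => ?_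
  congr 1
  ring

lemma sum_up {Q : Nat} (d : Fin Q → ℤ) (i j : Fin Q) (hi : 0 < d i) (hj : d j < 0) :
    ∑ k, |d k + ind i k - ind j k| = ∑ k, |d k| + 2 := by
  have hij : i ≠ j := by rintro rfl; omega
  have : ∀ k, |d k + ind i k - ind j k| = |d k| + ind i k + ind j k := by
    intro k
    unfold ind
    by_cases h1 : k = i
    · subst h1
      simp only [if_true, hij, if_false]
      rw [abs_of_pos hi, abs_of_nonneg (by omega)]; omega
    · by_cases h2 : k = j
      · subst h2
        simp only [if_true, h1, if_false]
        rw [abs_of_neg hj, abs_of_nonpos (by omega)]; omega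
      · simp [h1, h2]
  simp only [this, Finset.sum_add_distrib, sum_ind]
  ring

lemma sum_down {Q : Nat} (d : Fin Q → ℤ) (i j : Fin Q) (hi : 0 < d i) (hj : d j < 0) :
    ∑ k, |d k - ind i k + ind j k| = ∑ k, |d k| - 2 := by
  have hij : i ≠ j := by rintro rfl; omega
  have : ∀ k, |d k - ind i k + ind j k| = |d k| - ind i k - ind j k := by
    intro k
    unfold ind
    by_cases h1 : k = i
    · subst h1
      simp only [if_true, hij, if_false]
      rw [abs_of_pos hi, abs_of_nonneg (by omega)]; omega
    · by_cases h2 : k = j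
      · subst h2
        simp only [if_true, h1, if_false]
        rw [abs_of_neg hj, abs_of_nonpos (by omega)]; omega
      · simp [h1, h2]
  simp only [this, Finset.sum_sub_distrib, sum_ind]
  ring

lemma dm_swap {Q : Nat} (d : Fin Q → ℤ) (i j : Fin Q) (hi : 0 < d i) (hj : d j < 0) :
    dm d (j, i) (j, j) = ∑ k, |d k| + 2 ∧ dm d (j, j) (j, i) = ∑ k, |d k| - 2 ∧
    dm d (i, j) (i, i) = ∑ k, |d k| - 2 ∧ dm d (i, i) (i, j) = ∑ k, |d k| + 2 := by
  rw [← sum_up d i j hi hj, ← sum_down d i j hi hj]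
  unfold dm
  refine ⟨?_, ?_, ?_, ?_⟩ <;>
  · refine Finset.sum_congr rfl fun k _ => ?_
    congr 1
    ring

/-- The perturbed coupling of moves. Here `A` and `B` are lower bounds for all loads and all
numbers of free slots, and `i`, `j` are an excess and a deficit site of `x` relative to `y`; each
of the two exchanges carries the mass `A * B`. -/
lemma exists_move_coupling {Q : Nat} (kap : Nat) (x y : Fin Q → ℤ)
    (hx : ∀ k, 0 ≤ x k ∧ x k ≤ kap) (hy : ∀ k, 0 ≤ y k ∧ y k ≤ kap)
    (hxy : ∑ k, x k = ∑ k, y k) (A B : ℝ) (hA : 0 ≤ A) (hB : 0 ≤ B)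
    (hxA : ∀ k, A ≤ x k) (hyA : ∀ k, A ≤ y k)
    (hxB : ∀ k, B ≤ kap - x k) (hyB : ∀ k, B ≤ kap - y k)
    (i j : Fin Q) (hi : y i < x i) (hj : x j < y j) :
    ∃ q : Fin Q × Fin Q → Fin Q × Fin Q → ℝ,
      (∀ m m', 0 ≤ q m m') ∧ (∀ m, ∑ m', q m m' = mw kap x m) ∧
      (∀ m', ∑ m, q m m' = mw kap y m') ∧
      (∀ e : ℤ, (e = 2 ∨ e = -2) → 2 * (A * B) ≤ ∑ m, ∑ m',
        (if dm (fun k => x k - y k) m m' - ∑ k, |x k - y k| = e then q m m' else 0)) ∧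
      ∑ m, ∑ m', q m m' *
        ((dm (fun k => x k - y k) m m' - ∑ k, |x k - y k| : ℤ) : ℝ) ≤ 0 := by
  have hij : i ≠ j := by rintro rfl; omega
  have hAB : 0 ≤ A * B := mul_nonneg hA hB
  obtain ⟨w1, w2, w3, w4⟩ := dm_swap (fun k => x k - y k) i j
    (by omega) (by omega)
  have hdiag : ∀ m : Fin Q × Fin Q, A * B ≤ baseQ kap x y m m := by
    intro m
    rw [baseQ_diag]
    have hpos : 0 ≤ ind m.1 m.2 := by unfold ind; split_ifs <;> omega
    have hpos' : (0 : ℝ) ≤ (ind m.1 m.2 : ℝ) := by exact_mod_cast hpos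
    refine mul_le_mul ?_ ?_ hB (by exact_mod_cast le_min (hx _).1 (hy _).1)
    · rw [Int.cast_min]; exact le_min (hxA _) (hyA _)
    · rw [Int.cast_min]
      have := hxB m.2
      have := hyB m.2
      apply le_min <;> push_cast <;> linarith
  have n1 : ((j, i) : Fin Q × Fin Q) ≠ (j, j) := by simp [hij]
  have n2 : ((i, j) : Fin Q × Fin Q) ≠ (i, i) := by simp [hij.symm]
  have hq : ∀ m m', 0 ≤ baseQ kap x y m m' + pert (A * B) (j, i) (j, j) m m'
      + pert (A * B) (i, j) (i, i) m m' := by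
    intro m m'
    have p1 := pert_lower (A * B) hAB (j, i) (j, j) m m'
    have p2 := pert_lower (A * B) hAB (i, j) (i, i) m m'
    by_cases hmm : m = m'
    · subst hmm
      have h0 := hdiag m
      -- the two exchanges take mass from disjoint sets of diagonal points
      by_cases hm : m = (j, i) ∨ m = (j, j)
      · have hm' : ¬ (m = (i, j) ∨ m = (i, i)) := by
          rcases hm with rfl | rfl <;> simp [hij, hij.symm]
        simp only [true_and, if_pos hm, if_neg hm'] at p1 p2
        linarith
      · simp only [true_and, if_neg hm] at p1 p2
        split_ifs at p2 <;> linarith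
    · have h0 := baseQ_nonneg kap x y hx hy m m'
      simp only [hmm, false_and, if_false] at p1 p2
      linarith
  refine ⟨fun m m' => baseQ kap x y m m' + pert (A * B) (j, i) (j, j) m m'
      + pert (A * B) (i, j) (i, i) m m', hq, ?_, ?_, ?_, ?_⟩
  · intro m
    simp only [Finset.sum_add_distrib, pert_row, baseQ_row kap x y hxy, add_zero]
  · intro m
    simp only [Finset.sum_add_distrib, pert_col, baseQ_col kap x y hxy, add_zero]
  · intro e he
    -- two pairs of moves with the required change already carry the mass
    have key : ∀ (a b a' b' : Fin Q × Fin Q) (g : Fin Q × Fin Q → Fin Q × Fin Q → ℝ),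
        (∀ m m', 0 ≤ g m m') → a ≠ a' → g a b + g a' b' ≤ ∑ m, ∑ m', g m m' := by
      intro a b a' b' g hg haa
      have e1 : g a b ≤ ∑ m', g a m' :=
        Finset.single_le_sum (fun m' _ => hg a m') (Finset.mem_univ b)
      have e2 : g a' b' ≤ ∑ m', g a' m' :=
        Finset.single_le_sum (fun m' _ => hg a' m') (Finset.mem_univ b')
      have e3 := Finset.sum_le_sum_of_subset_of_nonneg (f := fun m => ∑ m', g m m')
        (Finset.subset_univ {a, a'}) (fun m _ _ => Finset.sum_nonneg fun m' _ => hg m m')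
      rw [Finset.sum_pair haa] at e3
      linarith
    have hp1 := pert_at (A * B) _ _ n1
    have hp2 := pert_at (A * B) _ _ n2
    have low1 : ∀ m m', m ≠ m' → 0 ≤ baseQ kap x y m m' + pert (A * B) (j, i) (j, j) m m' := by
      intro m m' hmm
      have p1 := pert_lower (A * B) hAB (j, i) (j, j) m m'
      have h0 := baseQ_nonneg kap x y hx hy m m'
      simp only [hmm, false_and, if_false] at p1
      linarith
    have low2 : ∀ m m', m ≠ m' → 0 ≤ baseQ kap x y m m' + pert (A * B) (i, j) (i, i) m m' := by
      intro m m' hmm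
      have p1 := pert_lower (A * B) hAB (i, j) (i, i) m m'
      have h0 := baseQ_nonneg kap x y hx hy m m'
      simp only [hmm, false_and, if_false] at p1
      linarith
    have hg : ∀ m m', 0 ≤ (if dm (fun k => x k - y k) m m' - ∑ k, |x k - y k| = e then
        baseQ kap x y m m' + pert (A * B) (j, i) (j, j) m m'
          + pert (A * B) (i, j) (i, i) m m' else 0) := by
      intro m m'
      split_ifs
      · exact hq m m'
      · exact le_rfl
    rcases he with rfl | rfl
    · refine le_trans ?_ (key (j, i) (j, j) (i, i) (i, j) _ hg (by simp [hij.symm]))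
      rw [if_pos (by rw [w1]; ring), if_pos (by rw [w4]; ring)]
      linarith [hp1.1, hp2.2, low1 _ _ n2.symm, low2 _ _ n1]
    · refine le_trans ?_ (key (j, j) (j, i) (i, j) (i, i) _ hg (by simp [hij.symm]))
      rw [if_pos (by rw [w2]; ring), if_pos (by rw [w3]; ring)]
      linarith [hp1.2, hp2.1, low1 _ _ n2, low2 _ _ n1.symm]
  · simp only [add_mul, Finset.sum_add_distrib]
    rw [pert_sum _ _ _ (fun m m' => ((dm (fun k => x k - y k) m m' - ∑ k, |x k - y k| : ℤ) : ℝ)),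
      pert_sum _ _ _ (fun m m' => ((dm (fun k => x k - y k) m m' - ∑ k, |x k - y k| : ℤ) : ℝ))]
    have hb : ∑ m, ∑ m', baseQ kap x y m m' *
        ((dm (fun k => x k - y k) m m' - ∑ k, |x k - y k| : ℤ) : ℝ) ≤ 0 := by
      refine Finset.sum_nonpos fun m _ => Finset.sum_nonpos fun m' _ => ?_
      by_cases h : baseQ kap x y m m' = 0
      · simp [h]
      · refine mul_nonpos_of_nonneg_of_nonpos (baseQ_nonneg kap x y hx hy m m') ?_
        have := baseQ_supp kap x y m m' h
        exact_mod_cast sub_nonpos.2 this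
    rw [w1, w2, w3, w4]
    simp only [dm_diag]
    push_cast at hb ⊢
    linarith

/-! ### From moves to states -/

/-- The loads of a state as integers. -/
def ld {Q kap n : Nat} (xi : LoadState Q kap n) (k : Fin Q) : ℤ := ((xi.1 k : Nat) : ℤ)

lemma ld_bd {Q kap n : Nat} (xi : LoadState Q kap n) (k : Fin Q) :
    0 ≤ ld xi k ∧ ld xi k ≤ kap := by
  unfold ld
  have := (xi.1 k).2
  omega

lemma ld_sum {Q kap n : Nat} (xi : LoadState Q kap n) : ∑ k, ld xi k = n := by
  unfold ld
  exact_mod_cast xi.2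

lemma ld_inj {Q kap n : Nat} (xi eta : LoadState Q kap n) (h : ∀ k, ld xi k = ld eta k) :
    xi = eta := by
  apply Subtype.ext
  funext k
  apply Fin.ext
  have := h k
  unfold ld at this
  omega

lemma exists_move {Q kap n : Nat} (xi : LoadState Q kap n) (m : Fin Q × Fin Q)
    (h : mw kap (ld xi) m ≠ 0) :
    ∃ y : LoadState Q kap n, ∀ k, ld y k = ld xi k - ind m.1 k + ind m.2 k := by
  unfold mw at h
  have h1 : ld xi m.1 ≠ 0 := by exact_mod_cast left_ne_zero_of_mul h
  have h2 : (kap : ℤ) - ld xi m.2 + ind m.1 m.2 ≠ 0 := by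
    exact_mod_cast right_ne_zero_of_mul h
  have hb : ∀ k, 0 ≤ ld xi k - ind m.1 k + ind m.2 k ∧
      ld xi k - ind m.1 k + ind m.2 k ≤ kap := by
    intro k
    have hk := ld_bd xi k
    unfold ind at h2 ⊢
    by_cases e1 : k = m.1
    · subst e1
      by_cases e2 : m.1 = m.2
      · simp [e2] at *; omega
      · simp [e2]; omega
    · by_cases e2 : k = m.2
      · subst e2
        simp [e1] at *; omega
      · simp [e1, e2]; omega
  have hc : ∀ k, (((ld xi k - ind m.1 k + ind m.2 k).toNat : ℕ) : ℤ)
      = ld xi k - ind m.1 k + ind m.2 k := fun k => Int.toNat_of_nonneg (hb k).1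
  refine ⟨⟨fun k => ⟨(ld xi k - ind m.1 k + ind m.2 k).toNat, ?_⟩, ?_⟩, ?_⟩
  · have := hb k
    omega
  · have : ∑ k, (((ld xi k - ind m.1 k + ind m.2 k).toNat : ℕ) : ℤ) = n := by
      simp only [hc, Finset.sum_add_distrib, Finset.sum_sub_distrib, sum_ind, ld_sum]
      ring
    exact_mod_cast this
  · intro k
    exact hc k

/-- The state reached from `xi` by the move `m`; it is `xi` itself if the move is impossible. -/
def mv {Q kap n : Nat} (xi : LoadState Q kap n) (m : Fin Q × Fin Q) : LoadState Q kap n :=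
  if h : ∃ y : LoadState Q kap n, ∀ k, ld y k = ld xi k - ind m.1 k + ind m.2 k then h.choose
  else xi

lemma mv_ld {Q kap n : Nat} (xi : LoadState Q kap n) (m : Fin Q × Fin Q)
    (h : mw kap (ld xi) m ≠ 0) (k : Fin Q) :
    ld (mv xi m) k = ld xi k - ind m.1 k + ind m.2 k := by
  unfold mv
  rw [dif_pos (exists_move xi m h)]
  exact (exists_move xi m h).choose_spec k

lemma mv_eq_iff {Q kap n : Nat} (xi y : LoadState Q kap n) (m : Fin Q × Fin Q)
    (h : mw kap (ld xi) m ≠ 0) :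
    mv xi m = y ↔ ∀ k, ld y k = ld xi k - ind m.1 k + ind m.2 k := by
  constructor
  · rintro rfl k
    exact mv_ld xi m h k
  · intro hy
    exact ld_inj _ _ fun k => by rw [mv_ld xi m h k, hy k]

/-- The chain is the image of the random move under `mv`. If `n = 0`, then both sides are `0`
because of the division by `0`. -/
lemma loadP_eq {Q kap n : Nat} (xi y : LoadState Q kap n) :
    loadP Q kap n xi y = (∑ m, if mv xi m = y then mw kap (ld xi) m else 0)
      / ((n : Real) * ((1 + kap * Q - n : Nat) : Real)) := by
  unfold loadP
  have hsub : ∀ k, ((kap - (xi.1 k : Nat) : Nat) : ℤ) = kap - ld xi k := by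
    intro k
    have := (xi.1 k).2
    unfold ld
    omega
  have hsub1 : ∀ k, ((1 + kap - (xi.1 k : Nat) : Nat) : ℤ) = kap - ld xi k + 1 := by
    intro k
    have := (xi.1 k).2
    unfold ld
    omega
  split_ifs with hy
  · subst hy
    congr 1
    rw [Fintype.sum_prod_type]
    refine Finset.sum_congr rfl fun u _ => ?_
    rw [Finset.sum_eq_single u]
    · have e : mw kap (ld y) (u, u)
          = ((y.1 u : Nat) : Real) * (((1 + kap - (y.1 u : Nat) : Nat)) : Real) := by
        unfold mw
        have := hsub1 u
        have h2 : (((1 + kap - (y.1 u : Nat) : Nat)) : Real) = ((kap - ld y u + 1 : ℤ) : ℝ) := by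
          rw [← this]; simp
        rw [h2]
        simp [ind, ld]
      by_cases h0 : mw kap (ld y) (u, u) = 0
      · rw [← e, h0]; simp
      · rw [if_pos ((mv_eq_iff y y _ h0).2 fun k => by ring), e]
    · intro v _ hv
      by_cases h0 : mw kap (ld y) (u, v) = 0
      · rw [h0]; simp
      · rw [if_neg]
        rw [mv_eq_iff y y _ h0]
        intro hc
        have := hc u
        simp [ind, Ne.symm hv] at this
        omega
    · simp
  · congr 1
    rw [Fintype.sum_prod_type]
    refine Finset.sum_congr rfl fun u _ => Finset.sum_congr rfl fun v _ => ?_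
    by_cases huv : u = v
    · subst huv
      rw [if_neg (by simp)]
      by_cases h0 : mw kap (ld xi) (u, u) = 0
      · simp [h0]
      · rw [if_neg]
        rw [mv_eq_iff xi y _ h0]
        intro hc
        exact hy (ld_inj _ _ fun k => by rw [hc k]; ring)
    · have e : mw kap (ld xi) (u, v)
          = ((xi.1 u : Nat) : Real) * (((kap - (xi.1 v : Nat) : Nat)) : Real) := by
        unfold mw
        have := hsub v
        have h2 : (((kap - (xi.1 v : Nat) : Nat)) : Real) = ((kap - ld xi v : ℤ) : ℝ) := by
          rw [← this]; simp
        rw [h2]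
        simp [ind, ld, Ne.symm huv]
      rw [← e]
      by_cases h0 : mw kap (ld xi) (u, v) = 0
      · simp [h0]
      · refine if_congr ?_ rfl rfl
        rw [mv_eq_iff xi y _ h0]
        constructor
        · rintro ⟨-, h1, h2, h3⟩ k
          simp only [ind, ld]
          by_cases e1 : k = u
          · subst e1; simp [huv]; omega
          · by_cases e2 : k = v
            · subst e2; simp [e1]; omega
            · simp [e1, e2, h3 k e1 e2]
        · intro h
          refine ⟨huv, ?_, ?_, ?_⟩
          · have := h u
            simp [ind, ld, huv] at this; omega
          · have := h v
            simp [ind, ld, Ne.symm huv] at this; omega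
          · intro k e1 e2
            have := h k
            simp [ind, ld, e1, e2] at this
            exact Fin.ext this

lemma loadD_eq {Q kap n : Nat} (xi eta : LoadState Q kap n) :
    loadD Q kap n xi eta = (1 / 2) * ((∑ k, |ld xi k - ld eta k| : ℤ) : ℝ) := by
  unfold loadD ld
  push_cast
  rfl

/-- The coupling of transitions induced by a coupling `q` of moves. -/
def push {Q kap n : Nat} (xi eta : LoadState Q kap n)
    (q : Fin Q × Fin Q → Fin Q × Fin Q → ℝ) (w : LoadState Q kap n × LoadState Q kap n) : ℝ :=
  (∑ m, ∑ m', if mv xi m = w.1 ∧ mv eta m' = w.2 then q m m' else 0)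
    / ((n : Real) * ((1 + kap * Q - n : Nat) : Real))

lemma push_sum {Q kap n : Nat} (xi eta : LoadState Q kap n)
    (q : Fin Q × Fin Q → Fin Q × Fin Q → ℝ)
    (f : LoadState Q kap n × LoadState Q kap n → ℝ) :
    ∑ w, push xi eta q w * f w = (∑ m, ∑ m', q m m' * f (mv xi m, mv eta m'))
      / ((n : Real) * ((1 + kap * Q - n : Nat) : Real)) := by
  unfold push
  simp only [div_mul_eq_mul_div, ← Finset.sum_div, Finset.sum_mul]
  congr 1
  rw [Finset.sum_comm]
  refine Finset.sum_congr rfl fun m _ => ?_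
  rw [Finset.sum_comm]
  refine Finset.sum_congr rfl fun m' _ => ?_
  rw [Finset.sum_eq_single (mv xi m, mv eta m')]
  · simp
  · intro w _ hw
    rw [if_neg, zero_mul]
    rintro ⟨h1, h2⟩
    exact hw (Prod.ext h1.symm h2.symm)
  · simp

lemma push_row {Q kap n : Nat} (xi eta : LoadState Q kap n)
    (q : Fin Q × Fin Q → Fin Q × Fin Q → ℝ) (hq : ∀ m, ∑ m', q m m' = mw kap (ld xi) m)
    (y : LoadState Q kap n) : ∑ y', push xi eta q (y, y') = loadP Q kap n xi y := by
  rw [loadP_eq]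
  unfold push
  rw [← Finset.sum_div]
  congr 1
  rw [Finset.sum_comm]
  refine Finset.sum_congr rfl fun m _ => ?_
  rw [Finset.sum_comm]
  by_cases h : mv xi m = y
  · simp [h, hq]
  · simp [h]

lemma push_col {Q kap n : Nat} (xi eta : LoadState Q kap n)
    (q : Fin Q × Fin Q → Fin Q × Fin Q → ℝ) (hq : ∀ m', ∑ m, q m m' = mw kap (ld eta) m')
    (y' : LoadState Q kap n) : ∑ y, push xi eta q (y, y') = loadP Q kap n eta y' := by
  rw [loadP_eq]
  unfold push
  rw [← Finset.sum_div]
  congr 1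
  rw [Finset.sum_comm]
  simp only [Finset.sum_comm (s := (Finset.univ : Finset (LoadState Q kap n)))]
  rw [Finset.sum_comm]
  refine Finset.sum_congr rfl fun m' _ => ?_
  by_cases h : mv eta m' = y'
  · simp [h, ← hq]
  · simp [h]

lemma push_nonneg {Q kap n : Nat} (xi eta : LoadState Q kap n)
    (q : Fin Q × Fin Q → Fin Q × Fin Q → ℝ) (hq : ∀ m m', 0 ≤ q m m')
    (w : LoadState Q kap n × LoadState Q kap n) : 0 ≤ push xi eta q w := by
  unfold push
  refine div_nonneg (Finset.sum_nonneg fun m _ => Finset.sum_nonneg fun m' _ => ?_)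
    (by positivity)
  split_ifs
  · exact hq m m'
  · exact le_rfl

lemma loadD_mv {Q kap n : Nat} (xi eta : LoadState Q kap n) (m m' : Fin Q × Fin Q)
    (h : mw kap (ld xi) m ≠ 0) (h' : mw kap (ld eta) m' ≠ 0) :
    loadD Q kap n (mv xi m) (mv eta m') - loadD Q kap n xi eta =
      (1 / 2) * ((dm (fun k => ld xi k - ld eta k) m m' - ∑ k, |ld xi k - ld eta k| : ℤ) : ℝ) := by
  rw [loadD_eq, loadD_eq, Int.cast_sub, mul_sub]
  congr 3
  unfold dm
  refine Finset.sum_congr rfl fun k _ => ?_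
  rw [mv_ld xi m h, mv_ld eta m' h']
  congr 1
  ring

/-! ### Estimates near the uniform profile -/

lemma near_bounds {Q kap n : Nat} (hQ : 2 ≤ Q) (hkap : 0 < kap) (rho del : ℝ)
    (hdel1 : del < min rho (1 - rho) / (4 * Q)) (xi : LoadState Q kap n)
    (h : loadNear Q kap n rho xi (2 * del)) (k : Fin Q) :
    |(ld xi k : ℝ) - kap * rho| < kap * min rho (1 - rho) / 2 := by
  unfold loadNear at h
  have hQ' : (0 : ℝ) < Q := by exact_mod_cast (by omega : 0 < Q)
  have hk' : (0 : ℝ) < kap := by exact_mod_cast hkap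
  have h1 : |((xi.1 k : Nat) : ℝ) / ((kap * Q : Nat) : ℝ) - rho / (Q : ℝ)| ≤ 2 * del := by
    refine le_trans ?_ h
    apply Real.abs_le_sqrt
    exact Finset.single_le_sum
      (f := fun v => (((xi.1 v : Nat) : Real) / ((kap * Q : Nat) : Real) - rho / (Q : Real))^2)
      (fun v _ => sq_nonneg _) (Finset.mem_univ k)
  have h2 : (ld xi k : ℝ) - kap * rho
      = (kap * Q) * (((xi.1 k : Nat) : ℝ) / ((kap * Q : Nat) : ℝ) - rho / (Q : ℝ)) := by
    unfold ld
    push_cast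
    field_simp
  rw [h2, abs_mul, abs_of_pos (mul_pos hk' hQ')]
  calc _ ≤ (kap * Q) * (2 * del) := by gcongr
    _ < (kap * Q) * (2 * (min rho (1 - rho) / (4 * Q))) := by gcongr
    _ = _ := by field_simp; ring

lemma mass_bound (Q kap n : Nat) (hQ : 2 ≤ Q) (rho : ℝ) (hrho0 : 0 < rho)
    (hn : n = ⌊rho * ((kap * Q : Nat) : Real)⌋₊) (hn0 : 0 < n) (hnN : n ≤ kap * Q)
    (h1 : 1 < kap * (1 - rho)) :
    (1 : ℝ) / (4 * (Q : ℝ) ^ 2) ≤ 2 * ((kap * rho / 2) * (kap * (1 - rho) / 2)) /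
      ((n : Real) * ((1 + kap * Q - n : Nat) : Real)) := by
  have hQ' : (2 : ℝ) ≤ Q := by exact_mod_cast hQ
  have hle : (n : ℝ) ≤ rho * (kap * Q) := by
    rw [hn]
    refine (Nat.floor_le (by positivity)).trans (le_of_eq ?_)
    push_cast; ring
  have hlt : rho * (kap * Q) < n + 1 := by
    have := Nat.lt_floor_add_one (rho * ((kap * Q : Nat) : Real))
    rw [← hn] at this
    push_cast at this; exact this
  have hc : ((1 + kap * Q - n : Nat) : Real) = 1 + kap * Q - n := by
    rw [Nat.cast_sub (by omega)]; push_cast; ring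
  have hn0' : (0 : ℝ) < n := by exact_mod_cast hn0
  have hnN' : (n : ℝ) ≤ kap * Q := by exact_mod_cast hnN
  rw [hc, div_le_div_iff₀ (by positivity) (by apply mul_pos <;> linarith)]
  have hk : (0 : ℝ) ≤ kap := Nat.cast_nonneg _
  have hb : 1 + (kap : ℝ) * Q - n ≤ 2 * (kap * Q * (1 - rho)) := by
    -- `1 + κQ - n < 2 + κQ(1-ρ)`, and `2 ≤ Q ≤ κQ(1-ρ)`
    nlinarith
  calc 1 * ((n : ℝ) * (1 + kap * Q - n))
      ≤ (rho * (kap * Q)) * (2 * (kap * Q * (1 - rho))) := by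
        rw [one_mul]
        apply mul_le_mul hle hb (by linarith) (by positivity)
    _ = _ := by ring

lemma exists_pos_neg {Q kap n : Nat} (xi eta : LoadState Q kap n)
    (h : 0 < loadD Q kap n xi eta) :
    (∃ i, ld eta i < ld xi i) ∧ ∃ j, ld xi j < ld eta j := by
  have hne : ∃ k ∈ Finset.univ, ld xi k - ld eta k ≠ 0 := by
    by_contra! hc
    have hz : ∑ k, |ld xi k - ld eta k| = 0 :=
      Finset.sum_eq_zero fun k hk => by rw [hc k hk, abs_zero]
    rw [loadD_eq, hz] at h
    simp at h
  have hs : ∑ k, (ld xi k - ld eta k) = 0 := by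
    rw [Finset.sum_sub_distrib, ld_sum, ld_sum, sub_self]
  constructor
  · obtain ⟨i, -, hi⟩ := Finset.exists_pos_of_sum_zero_of_exists_nonzero _ hs hne
    exact ⟨i, by omega⟩
  · obtain ⟨j, -, hj⟩ := Finset.exists_pos_of_sum_zero_of_exists_nonzero
      (fun k => -(ld xi k - ld eta k)) (by rw [Finset.sum_neg_distrib, hs, neg_zero])
      (by obtain ⟨k, hk, hk'⟩ := hne; exact ⟨k, hk, neg_ne_zero.2 hk'⟩)
    exact ⟨j, by omega⟩


/-- existence of a contracting coupling for the load profile chain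
(Lemma 2.4). -/
theorem statement5 (Q : Nat) (hQ : 2 ≤ Q) (rho : Real) (hrho0 : 0 < rho) (hrho1 : rho < 1)
    (del : Real) (hdel0 : 0 < del) (hdel1 : del < min rho (1 - rho) / (4 * Q))
    (kap : Nat) (hkap : 0 < kap) (n : Nat) (hn : n = ⌊rho * ((kap * Q : Nat) : Real)⌋₊) :
    ∃ cp : (LoadState Q kap n × LoadState Q kap n) →
            (LoadState Q kap n × LoadState Q kap n) → Real,
      (∀ z w, 0 ≤ cp z w) ∧
      (∀ z : LoadState Q kap n × LoadState Q kap n, ∀ y : LoadState Q kap n,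
        (∑ y' : LoadState Q kap n, cp z (y, y')) = loadP Q kap n z.1 y) ∧
      (∀ z : LoadState Q kap n × LoadState Q kap n, ∀ y' : LoadState Q kap n,
        (∑ y : LoadState Q kap n, cp z (y, y')) = loadP Q kap n z.2 y') ∧
      (∀ z : LoadState Q kap n × LoadState Q kap n,
        loadNear Q kap n rho z.1 (2 * del) → loadNear Q kap n rho z.2 (2 * del) →
        0 < loadD Q kap n z.1 z.2 →
          (∀ r : Real, (r = 1 ∨ r = -1) →
            (1 : Real) / (4 * (Q : Real)^2) ≤
              ∑ w : LoadState Q kap n × LoadState Q kap n,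
                (if loadD Q kap n w.1 w.2 - loadD Q kap n z.1 z.2 = r then cp z w else 0)) ∧
          (∑ w : LoadState Q kap n × LoadState Q kap n,
              cp z w * (loadD Q kap n w.1 w.2 - loadD Q kap n z.1 z.2)) ≤ 0) := by
  have main : ∀ z : LoadState Q kap n × LoadState Q kap n,
      ∃ c : (LoadState Q kap n × LoadState Q kap n) → Real,
      (∀ w, 0 ≤ c w) ∧
      (∀ y, (∑ y', c (y, y')) = loadP Q kap n z.1 y) ∧
      (∀ y', (∑ y, c (y, y')) = loadP Q kap n z.2 y') ∧
      (loadNear Q kap n rho z.1 (2 * del) → loadNear Q kap n rho z.2 (2 * del) →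
        0 < loadD Q kap n z.1 z.2 →
          (∀ r : Real, (r = 1 ∨ r = -1) →
            (1 : Real) / (4 * (Q : Real)^2) ≤
              ∑ w : LoadState Q kap n × LoadState Q kap n,
                (if loadD Q kap n w.1 w.2 - loadD Q kap n z.1 z.2 = r then c w else 0)) ∧
          (∑ w : LoadState Q kap n × LoadState Q kap n,
              c w * (loadD Q kap n w.1 w.2 - loadD Q kap n z.1 z.2)) ≤ 0) := by
    rintro ⟨xi, eta⟩
    have hsum : ∑ k, ld xi k = ∑ k, ld eta k := by rw [ld_sum, ld_sum]
    by_cases hz : loadNear Q kap n rho xi (2 * del) ∧ loadNear Q kap n rho eta (2 * del) ∧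
        0 < loadD Q kap n xi eta
    · obtain ⟨hn1, hn2, hD⟩ := hz
      obtain ⟨⟨i, hi⟩, j, hj⟩ := exists_pos_neg xi eta hD
      have b1 := near_bounds hQ hkap rho del hdel1 xi hn1
      have b2 := near_bounds hQ hkap rho del hdel1 eta hn2
      have hk' : (0 : ℝ) < kap := by exact_mod_cast hkap
      have m1 : (kap : ℝ) * min rho (1 - rho) ≤ kap * rho :=
        mul_le_mul_of_nonneg_left (min_le_left _ _) hk'.le
      have m2 : (kap : ℝ) * min rho (1 - rho) ≤ kap * (1 - rho) :=
        mul_le_mul_of_nonneg_left (min_le_right _ _) hk'.le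
      have hk1 : 1 < (kap : ℝ) * (1 - rho) := by
        have e1 := (abs_lt.1 (b1 i)).2
        have e2 := (abs_lt.1 (b2 i)).1
        have e3 : (ld eta i : ℝ) + 1 ≤ ld xi i := by exact_mod_cast hi
        linarith
      have hxA : ∀ k, (kap : ℝ) * rho / 2 ≤ ld xi k := fun k => by
        have := (abs_lt.1 (b1 k)).1
        linarith
      have hyA : ∀ k, (kap : ℝ) * rho / 2 ≤ ld eta k := fun k => by
        have := (abs_lt.1 (b2 k)).1
        linarith
      have hxB : ∀ k, (kap : ℝ) * (1 - rho) / 2 ≤ kap - ld xi k := fun k => by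
        have := (abs_lt.1 (b1 k)).2
        linarith
      have hyB : ∀ k, (kap : ℝ) * (1 - rho) / 2 ≤ kap - ld eta k := fun k => by
        have := (abs_lt.1 (b2 k)).2
        linarith
      obtain ⟨q, q0, qr, qc, qp, qe⟩ := exists_move_coupling kap (ld xi) (ld eta)
        (ld_bd xi) (ld_bd eta) hsum (kap * rho / 2) (kap * (1 - rho) / 2)
        (by positivity) (by linarith) hxA hyA hxB hyB i j hi hj
      have hn0 : 0 < n := by
        have h0 : (0 : ℤ) < n := by
          rw [← ld_sum xi]
          exact lt_of_lt_of_le (lt_of_le_of_lt (ld_bd eta i).1 hi)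
            (Finset.single_le_sum (f := ld xi) (fun k _ => (ld_bd xi k).1) (Finset.mem_univ i))
        exact_mod_cast h0
      have hnN : n ≤ kap * Q := by
        have h0 : (n : ℤ) ≤ kap * Q := by
          rw [← ld_sum xi]
          refine (Finset.sum_le_sum fun k _ => (ld_bd xi k).2).trans (le_of_eq ?_)
          simp [mul_comm]
        exact_mod_cast h0
      -- only possible moves carry mass, and on those `dm` computes the new distance
      have hD' : ∀ m m', q m m' ≠ 0 →
          loadD Q kap n (mv xi m) (mv eta m') - loadD Q kap n xi eta =
          (1 / 2) * ((dm (fun k => ld xi k - ld eta k) m m'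
            - ∑ k, |ld xi k - ld eta k| : ℤ) : ℝ) := by
        intro m m' hq
        refine loadD_mv xi eta m m' (fun h => hq ?_) (fun h => hq ?_)
        · rw [← qr m] at h
          exact (Finset.sum_eq_zero_iff_of_nonneg (fun m' _ => q0 m m')).1 h m' (Finset.mem_univ _)
        · rw [← qc m'] at h
          exact (Finset.sum_eq_zero_iff_of_nonneg (fun m _ => q0 m m')).1 h m (Finset.mem_univ _)
      refine ⟨push xi eta q, push_nonneg xi eta q q0, push_row xi eta q qr,
        push_col xi eta q qc, fun _ _ _ => ⟨?_, ?_⟩⟩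
      · intro r hr
        refine (mass_bound Q kap n hQ rho hrho0 hn hn0 hnN hk1).trans ?_
        obtain ⟨e, he, her⟩ : ∃ e : ℤ, (e = 2 ∨ e = -2) ∧ r = (1 / 2) * (e : ℝ) := by
          rcases hr with rfl | rfl
          · exact ⟨2, Or.inl rfl, by norm_num⟩
          · exact ⟨-2, Or.inr rfl, by norm_num⟩
        have hpush := push_sum xi eta q
          (fun w => if loadD Q kap n w.1 w.2 - loadD Q kap n xi eta = r then 1 else 0)
        simp only [mul_ite, mul_one, mul_zero] at hpush
        rw [hpush]
        refine div_le_div_of_nonneg_right ((qp e he).trans (le_of_eq ?_)) (by positivity)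
        refine Finset.sum_congr rfl fun m _ => Finset.sum_congr rfl fun m' _ => ?_
        by_cases hq : q m m' = 0
        · simp [hq]
        · refine if_congr ?_ rfl rfl
          rw [hD' m m' hq, her]
          constructor
          · intro h; rw [h]
          · intro h
            exact_mod_cast mul_left_cancel₀ (by norm_num : (1 / 2 : ℝ) ≠ 0) h
      · rw [push_sum xi eta q
          (fun w => loadD Q kap n w.1 w.2 - loadD Q kap n xi eta)]
        refine div_nonpos_of_nonpos_of_nonneg ?_ (by positivity)
        have : ∀ m m', q m m' * (loadD Q kap n (mv xi m) (mv eta m') - loadD Q kap n xi eta) =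
            (1 / 2) * (q m m' * ((dm (fun k => ld xi k - ld eta k) m m'
              - ∑ k, |ld xi k - ld eta k| : ℤ) : ℝ)) := by
          intro m m'
          by_cases hq : q m m' = 0
          · simp [hq]
          · rw [hD' m m' hq]; ring
        simp only [this, ← Finset.mul_sum]
        linarith
    · exact ⟨push xi eta (baseQ kap (ld xi) (ld eta)),
        push_nonneg xi eta _ (baseQ_nonneg kap _ _ (ld_bd xi) (ld_bd eta)),
        push_row xi eta _ (baseQ_row kap _ _ hsum), push_col xi eta _ (baseQ_col kap _ _ hsum),
        fun h1 h2 h3 => absurd ⟨h1, h2, h3⟩ hz⟩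
  choose cp h0 h1 h2 h3 using main
  exact ⟨cp, h0, h1, h2, h3⟩

end CongestionPaper
end
end

section
/- Fix an integer Q ≥ 2 and a real ρ ∈ (0,1). For a positive integer κ let N = κQ and n = ⌊ρN⌋. For the load profile chain {ξ(t)} on Ξ_{n,S,κ}, with t_N := ⌈(1/2)(1−ρ)ρ N log N⌉, one has lim_{α→∞} limsup_{N→∞} D_TV( t_N + ⌈αN⌉ ) = 0. -/
/-!
The load profile chain is a projection of the exclusion walk on the `n`-subsets of `N = κ Q` slots,
`κ` slots per resource: a uniform particle is removed and put into a uniform vacant slot (`lump`,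
`evolve_lift`), and `loadPi` is the projection of the uniform law (`loadPi_eq`). Projection does not
increase total variation, so it suffices to bound the mixing of this walk (a Bernoulli–Laplace
model).

The transition matrix `P` of the walk is symmetric and commutes with the transitive action of the
permutations of the slots, so the `L²` distance to uniformity at time `t` is `Tr(P ^ (2 t)) - 1`, for
every starting point. The trace is computed level by level: up to scalars, `P` is `Wᵀ W`, where `W`
is the inclusion matrix between consecutive levels of the Boolean lattice, and `W Wᵀ` differs from
the same matrix one level lower by a multiple of the identity. This yields the eigenvalues
`(1 - i/n)(1 - i/M)`, `M = N - n + 1`, with multiplicities `C(N, i) - C(N, i - 1)`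
(`trace_johnson`), hence `Tr(P ^ (2 t)) ≤ exp(N exp(-2 t (1/n + 1/M)))` (`trace_bound`).

At `t = t_N + ⌈α N⌉` one has `N exp(-2 t (1/n + 1/M)) ≤ exp(2/(1-ρ) - 2 α)` uniformly in `N`
(`exponent_bound`), which tends to `0` as `α → ∞`.
-/

open scoped BigOperators
open Filter MeasureTheory

noncomputable section

namespace CongestionPaper

attribute [local instance 10] Classical.propDecidable

/-- Level `m` of the Boolean lattice on `α`: subsets of size `m`. -/
abbrev Lvl (α : Type*) (m : ℕ) := {A : Finset α // A.card = m}

/-- Inclusion matrix between levels `m` and `m + 1`. -/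
def incl (α : Type*) [DecidableEq α] (m : ℕ) : Matrix (Lvl α m) (Lvl α (m + 1)) ℝ :=
  Matrix.of fun C A => if C.1 ⊆ A.1 then 1 else 0

/-- The matrix `m • 1 + J`, where `J` is the adjacency matrix of the Johnson graph on `m`-subsets
(`A ~ B` when they differ by one exchange). At `m = 0` it is the zero matrix. -/
def johnson (α : Type*) [DecidableEq α] (m : ℕ) : Matrix (Lvl α m) (Lvl α m) ℝ :=
  Matrix.of fun A B => if A = B then (m : ℝ) else if (A.1 ∩ B.1).card + 1 = m then 1 else 0

/-- `C(N, i) - C(N, i - 1)`, with `C(N, -1) = 0`; for `2 * i ≤ N` this is the dimension of the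
`i`-th eigenspace of the Johnson scheme. It is negative for larger `i`. -/
def dimDiff (N : ℕ) : ℕ → ℝ
  | 0 => 1
  | (i + 1) => (N.choose (i + 1) : ℝ) - (N.choose i : ℝ)

/-! ### Traces of the Johnson matrices -/

section Johnson
variable {α : Type*} [Fintype α]

lemma card_lvl (m : ℕ) : Fintype.card (Lvl α m) = (Fintype.card α).choose m := by
  simp

lemma lvl_le {n : ℕ} (A : Lvl α n) : n ≤ Fintype.card α := A.2 ▸ Finset.card_le_univ _

variable [DecidableEq α]

/-- Removing and then re-adding a point: two `(m+1)`-sets have `C(|A ∩ B|, m)` common `m`-subsets. -/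
lemma inclT_mul_incl (m : ℕ) : (incl α m).transpose * incl α m = johnson α (m + 1) := by
  ext A B
  have h1 : ((incl α m).transpose * incl α m) A B
      = (((A.1 ∩ B.1).card.choose m : ℕ) : ℝ) := by
    rw [Matrix.mul_apply, ← Finset.card_powersetCard]
    simp only [Matrix.transpose_apply, incl, Matrix.of_apply, ← ite_and, mul_ite, mul_one, mul_zero]
    rw [Finset.sum_boole]
    norm_cast
    refine Finset.card_bij (fun C _ => C.1) ?_ ?_ ?_
    · intro C hC
      simp only [Finset.mem_filter, Finset.mem_univ, true_and] at hC
      exact Finset.mem_powersetCard.2 ⟨Finset.subset_inter hC.2 hC.1, C.2⟩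
    · intro C _ D _ h
      exact Subtype.ext h
    · intro C hC
      rw [Finset.mem_powersetCard, Finset.subset_inter_iff] at hC
      exact ⟨⟨C, hC.2⟩, by simp [hC.1.1, hC.1.2], rfl⟩
  rw [h1]
  simp only [johnson, Matrix.of_apply]
  split_ifs with h h'
  · subst h
    simp [A.2]
  · have : (A.1 ∩ B.1).card = m := by omega
    simp [this]
  · have hle : (A.1 ∩ B.1).card ≤ m + 1 := by
      conv_rhs => rw [← A.2]
      exact Finset.card_le_card Finset.inter_subset_left
    have hne : (A.1 ∩ B.1).card ≠ m + 1 := by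
      intro hc
      apply h
      have e1 : A.1 ∩ B.1 = A.1 :=
        Finset.eq_of_subset_of_card_le Finset.inter_subset_left (by rw [A.2, hc])
      have e2 : A.1 ∩ B.1 = B.1 :=
        Finset.eq_of_subset_of_card_le Finset.inter_subset_right (by rw [B.2, hc])
      exact Subtype.ext (e1.symm.trans e2)
    rw [Nat.choose_eq_zero_of_lt (by omega)]
    simp

/-- Adding and then removing a point is the Johnson matrix on the same level up to a scalar.
Together with `inclT_mul_incl` this links the spectra of consecutive levels. -/
lemma incl_mul_inclT (m : ℕ) :
    incl α m * (incl α m).transpose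
      = johnson α m + Matrix.scalar (Lvl α m) ((Fintype.card α : ℝ) - 2 * m) := by
  ext A B
  have h1 : (incl α m * (incl α m).transpose) A B
      = ((Finset.univ.filter fun C : Lvl α (m + 1) => A.1 ∪ B.1 ⊆ C.1).card : ℝ) := by
    rw [Matrix.mul_apply]
    simp only [Matrix.transpose_apply, incl, Matrix.of_apply, ← ite_and, mul_ite, mul_one, mul_zero]
    rw [Finset.sum_boole]
    congr 2
    ext C
    simp [Finset.union_subset_iff, and_comm]
  rw [h1]
  have hc := Finset.card_union_add_card_inter A.1 B.1
  rw [A.2, B.2] at hc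
  simp only [johnson, Matrix.of_apply, Matrix.add_apply, Matrix.scalar_apply, Matrix.diagonal_apply]
  have hAN : m ≤ Fintype.card α := A.2 ▸ Finset.card_le_univ _
  split_ifs with h h'
  · subst h
    have : (Finset.univ.filter fun C : Lvl α (m + 1) => A.1 ∪ A.1 ⊆ C.1).card
        = (A.1ᶜ).card := by
      symm
      refine Finset.card_bij (fun b hb => ⟨insert b A.1, by
        rw [Finset.card_insert_of_notMem (Finset.mem_compl.1 hb), A.2]⟩) ?_ ?_ ?_
      · intro b hb
        simp
      · intro b hb c hc h
        have h2 : insert b A.1 = insert c A.1 := congrArg Subtype.val h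
        have : b ∈ insert c A.1 := h2 ▸ Finset.mem_insert_self _ _
        exact (Finset.mem_insert.1 this).resolve_right (Finset.mem_compl.1 hb)
      · intro C hC
        simp only [Finset.union_idempotent, Finset.mem_filter, Finset.mem_univ, true_and] at hC
        have hcard : (C.1 \ A.1).card = 1 := by
          rw [Finset.card_sdiff_of_subset hC, C.2, A.2]; omega
        obtain ⟨b, hb⟩ := Finset.card_eq_one.1 hcard
        have hbm : b ∈ C.1 \ A.1 := by rw [hb]; simp
        refine ⟨b, Finset.mem_compl.2 (Finset.mem_sdiff.1 hbm).2, Subtype.ext ?_⟩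
        change insert b A.1 = C.1
        rw [Finset.insert_eq, ← hb, Finset.sdiff_union_of_subset hC]
    rw [this, Finset.card_compl, A.2, Nat.cast_sub hAN]
    ring
  · have : (Finset.univ.filter fun C : Lvl α (m + 1) => A.1 ∪ B.1 ⊆ C.1)
        = {⟨A.1 ∪ B.1, by omega⟩} := by
      ext C
      simp only [Finset.mem_filter, Finset.mem_univ, true_and, Finset.mem_singleton]
      constructor
      · intro hs
        refine Subtype.ext (Finset.eq_of_subset_of_card_le hs ?_).symm
        rw [C.2]; omega
      · rintro rfl; exact subset_rfl
    rw [this]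
    simp
  · have hne : (A.1 ∩ B.1).card ≠ m := by
      intro hc
      apply h
      have e1 : A.1 ∩ B.1 = A.1 :=
        Finset.eq_of_subset_of_card_le Finset.inter_subset_left (by rw [A.2, hc])
      have e2 : A.1 ∩ B.1 = B.1 :=
        Finset.eq_of_subset_of_card_le Finset.inter_subset_right (by rw [B.2, hc])
      exact Subtype.ext (e1.symm.trans e2)
    have : (Finset.univ.filter fun C : Lvl α (m + 1) => A.1 ∪ B.1 ⊆ C.1) = ∅ := by
      ext C
      simp only [Finset.mem_filter, Finset.mem_univ, true_and, Finset.notMem_empty, iff_false]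
      intro hs
      have := Finset.card_le_card hs
      have hle : (A.1 ∩ B.1).card ≤ m := by
        conv_rhs => rw [← A.2]
        exact Finset.card_le_card Finset.inter_subset_left
      rw [C.2] at this
      omega
    rw [this]
    simp

open Polynomial in
/-- `q(BA)` and `q(AB)` have the same trace up to the contribution of the constant term, which only
sees the sizes of the two matrices. -/
lemma trace_aeval_mul_comm {ι κ : Type*} [Fintype ι] [Fintype κ] [DecidableEq ι] [DecidableEq κ]
    (A : Matrix ι κ ℝ) (B : Matrix κ ι ℝ) (q : ℝ[X]) :
    (aeval (B * A) q).trace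
      = (aeval (A * B) q).trace + q.coeff 0 * ((Fintype.card κ : ℝ) - (Fintype.card ι : ℝ)) := by
  have hpow : ∀ k : ℕ, (B * A) ^ (k + 1) = B * (A * B) ^ k * A := by
    intro k
    induction k with
    | zero => simp
    | succ k ih => rw [pow_succ, ih, pow_succ (A * B) k]; simp only [Matrix.mul_assoc]
  induction q using Polynomial.induction_on' with
  | add p q hp hq => simp only [map_add, Matrix.trace_add, hp, hq, coeff_add]; ring
  | monomial k a =>
    rw [← C_mul_X_pow_eq_monomial]
    cases k with
    | zero => simp [Algebra.algebraMap_eq_smul_one, Matrix.trace_smul]; ring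
    | succ k =>
      simp only [map_mul, aeval_C, map_pow, aeval_X, Algebra.algebraMap_eq_smul_one, smul_mul_assoc,
        one_mul, Matrix.trace_smul, hpow]
      rw [Matrix.mul_assoc, Matrix.trace_mul_comm, Matrix.mul_assoc, ← pow_succ]
      simp

lemma sum_dimDiff (N m : ℕ) : ∑ i ∈ Finset.range (m + 1), dimDiff N i = (N.choose m : ℝ) := by
  induction m with
  | zero => simp [dimDiff]
  | succ m ih => rw [Finset.sum_range_succ, ih]; simp [dimDiff]

open Polynomial in
/-- Spectrum of the Johnson matrix in trace form: eigenvalue `(m - i)(N - m + 1 - i)` with signed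
multiplicity `dimDiff N i`, for `0 ≤ i ≤ m`. No restriction `2 * m ≤ N` is needed: for large `m` the
negative multiplicities cancel the surplus ones. -/
lemma trace_johnson (m : ℕ) (q : ℝ[X]) :
    (aeval (johnson α m) q).trace
      = ∑ i ∈ Finset.range (m + 1), dimDiff (Fintype.card α) i *
          q.eval (((m : ℝ) - i) * ((Fintype.card α : ℝ) - m + 1 - i)) := by
  induction m generalizing q with
  | zero =>
    have h0 : johnson α 0 = 0 := by
      ext A B; simp [johnson]
    have hc : (Fintype.card (Lvl α 0)) = 1 := by rw [card_lvl]; simp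
    rw [h0]
    rw [← Polynomial.coeff_zero_eq_aeval_zero']
    simp only [Algebra.algebraMap_eq_smul_one, Matrix.trace_smul, Matrix.trace_one, hc]
    simp [dimDiff, Polynomial.coeff_zero_eq_eval_zero]
  | succ m ih =>
    rw [← inclT_mul_incl, trace_aeval_mul_comm, incl_mul_inclT, Finset.sum_range_succ, card_lvl,
      card_lvl]
    have : aeval (johnson α m + Matrix.scalar (Lvl α m) ((Fintype.card α : ℝ) - 2 * m)) q
        = aeval (johnson α m) (q.comp (X + C ((Fintype.card α : ℝ) - 2 * m))) := by
      rw [aeval_comp]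
      congr 1
      simp only [map_add, aeval_X, aeval_C]
      rfl
    rw [this, ih]
    congr 1
    · refine Finset.sum_congr rfl fun i _ => ?_
      simp only [eval_comp, eval_add, eval_X, eval_C]
      congr 2
      push_cast
      ring
    · simp [dimDiff, Polynomial.coeff_zero_eq_eval_zero]
      ring

end Johnson

lemma dimDiff_reflect {N i : ℕ} (h1 : 1 ≤ i) (h2 : i ≤ N) : dimDiff N (N + 1 - i) = -dimDiff N i := by
  obtain ⟨j, rfl⟩ := Nat.exists_eq_add_of_le' h1
  obtain ⟨k, rfl⟩ := Nat.exists_eq_add_of_le' h2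
  have e : k + (j + 1) + 1 - (j + 1) = k + 1 := by omega
  rw [e]
  simp only [dimDiff]
  rw [Nat.choose_symm_of_eq_add (show k + (j + 1) = (k + 1) + j by omega),
    Nat.choose_symm_of_eq_add (show k + (j + 1) = k + (j + 1) by omega)]
  ring

lemma dimDiff_le (N i : ℕ) : dimDiff N i ≤ N.choose i := by
  cases i with
  | zero => simp [dimDiff]
  | succ i => simp [dimDiff]

/-- Diaconis–Shahshahani type bound for the trace of an even power: after the cancellation
`i ↔ N + 1 - i` only eigenvalues `(n - i)(M - i) ≥ 0` with `M = N - n + 1` remain; each is at most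
`n M exp(-i (1/n + 1/M))`, its multiplicity is at most `C(N, i)`, and the binomial theorem sums them. -/
lemma trace_bound {N n : ℕ} (hn : 1 ≤ n) (hnN : n ≤ N) (t : ℕ) :
    ∑ i ∈ Finset.range (n + 1),
        dimDiff N i * (((n : ℝ) - i) * ((N : ℝ) - n + 1 - i)) ^ (2 * t)
      ≤ ((n : ℝ) * ((N : ℝ) - n + 1)) ^ (2 * t) *
        Real.exp (N * Real.exp (-(2 * t * (1 / n + 1 / ((N : ℝ) - n + 1))))) := by
  set f : ℕ → ℝ := fun i => dimDiff N i * (((n : ℝ) - i) * ((N : ℝ) - n + 1 - i)) ^ (2 * t) with hf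
  set M : ℝ := (N : ℝ) - n + 1 with hM
  have hnN' : (n : ℝ) ≤ N := by exact_mod_cast hnN
  have hM1 : 1 ≤ M := by rw [hM]; linarith
  have hn1 : (1 : ℝ) ≤ n := by exact_mod_cast hn
  set r : ℝ := Real.exp (-(2 * t * (1 / n + 1 / M))) with hr
  have hMN : (((N - n + 1 : ℕ)) : ℝ) = M := by rw [hM]; push_cast [hnN]; ring
  -- For `M ≤ n` the terms with `M ≤ i ≤ n` cancel in pairs `i ↔ N + 1 - i`.
  have hsum : ∑ i ∈ Finset.range (n + 1), f i
      = ∑ i ∈ Finset.range (min (n + 1) (N - n + 1)), f i := by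
    rcases le_total (n + 1) (N - n + 1) with h | h
    · rw [min_eq_left h]
    · rw [min_eq_right h, ← Finset.sum_range_add_sum_Ico f h, add_eq_left]
      have hodd : ∀ i ∈ Finset.Ico (N - n + 1) (n + 1), f i + f (N + 1 - i) = 0 := by
        intro i hi
        rw [Finset.mem_Ico] at hi
        simp only [hf]
        rw [dimDiff_reflect (by omega) (by omega), Nat.cast_sub (by omega)]
        have : ((n : ℝ) - ((N + 1 : ℕ) - i)) * (M - ((N + 1 : ℕ) - i))
            = ((n : ℝ) - i) * (M - i) := by
          rw [hM]; push_cast; ring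
        rw [this]
        ring
      refine Finset.sum_involution (fun i _ => N + 1 - i) hodd ?_ ?_ ?_
      · intro i hi hne heq
        have := hodd i hi
        rw [heq] at this
        exact hne (by linarith)
      · intro i hi
        rw [Finset.mem_Ico] at hi ⊢
        omega
      · intro i hi
        rw [Finset.mem_Ico] at hi
        omega
  rw [hsum]
  have hterm : ∀ i ∈ Finset.range (min (n + 1) (N - n + 1)),
      f i ≤ ((n : ℝ) * M) ^ (2 * t) * (r ^ i * N.choose i) := by
    intro i hi
    rw [Finset.mem_range, lt_min_iff] at hi
    have hin : (i : ℝ) ≤ n := by exact_mod_cast Nat.lt_succ_iff.1 hi.1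
    have hiM : (i : ℝ) ≤ M := by
      rw [← hMN]; exact_mod_cast hi.2.le
    have hl : ((n : ℝ) - i) * (M - i) ≤ (n * M) * Real.exp (-(i * (1 / n + 1 / M))) := by
      have e1 : (n : ℝ) - i ≤ n * Real.exp (-(i / n)) := by
        have := Real.add_one_le_exp (-((i : ℝ) / n))
        calc (n : ℝ) - i = n * (-((i : ℝ) / n) + 1) := by field_simp; ring
          _ ≤ _ := by gcongr
      have e2 : M - i ≤ M * Real.exp (-(i / M)) := by
        have := Real.add_one_le_exp (-((i : ℝ) / M))
        calc M - i = M * (-((i : ℝ) / M) + 1) := by field_simp; ring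
          _ ≤ _ := by gcongr
      calc ((n : ℝ) - i) * (M - i)
          ≤ (n * Real.exp (-(i / n))) * (M * Real.exp (-(i / M))) :=
            mul_le_mul e1 e2 (by linarith) (by positivity)
        _ = (n * M) * (Real.exp (-(i / n)) * Real.exp (-(i / M))) := by ring
        _ = _ := by rw [← Real.exp_add]; congr 2; ring
    have hl0 : 0 ≤ ((n : ℝ) - i) * (M - i) := mul_nonneg (by linarith) (by linarith)
    calc f i ≤ N.choose i * (((n : ℝ) - i) * (M - i)) ^ (2 * t) :=
          mul_le_mul_of_nonneg_right (dimDiff_le N i) (by positivity)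
      _ ≤ N.choose i * ((n * M) * Real.exp (-(i * (1 / n + 1 / M)))) ^ (2 * t) := by gcongr
      _ = _ := by
        rw [mul_pow, hr, ← Real.exp_nat_mul, ← Real.exp_nat_mul]
        push_cast
        rw [show (2 * (t : ℝ)) * -(i * (1 / n + 1 / M)) = i * -(2 * t * (1 / n + 1 / M)) by ring]
        ring
  calc ∑ i ∈ Finset.range (min (n + 1) (N - n + 1)), f i
      ≤ ∑ i ∈ Finset.range (min (n + 1) (N - n + 1)),
          ((n : ℝ) * M) ^ (2 * t) * (r ^ i * N.choose i) := Finset.sum_le_sum hterm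
    _ ≤ ∑ i ∈ Finset.range (N + 1), ((n : ℝ) * M) ^ (2 * t) * (r ^ i * N.choose i) := by
        apply Finset.sum_le_sum_of_subset_of_nonneg
        · intro i hi
          rw [Finset.mem_range] at hi ⊢
          omega
        · intros
          positivity
    _ = ((n : ℝ) * M) ^ (2 * t) * (r + 1) ^ N := by
        rw [← Finset.mul_sum, add_pow]
        simp
    _ ≤ ((n : ℝ) * M) ^ (2 * t) * Real.exp r ^ N := by
        gcongr
        exact Real.add_one_le_exp r
    _ = _ := by rw [← Real.exp_nat_mul]

/-! ### The exclusion walk on subsets -/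

section Walk
variable {α : Type*} [DecidableEq α]

lemma johnson_transpose (m : ℕ) : (johnson α m).transpose = johnson α m := by
  ext A B
  simp only [Matrix.transpose_apply, johnson, Matrix.of_apply, Finset.inter_comm B.1, eq_comm (a := B)]

/-- The action of a permutation of the ground set on `n`-subsets. -/
def permLvl (n : ℕ) (σ : Equiv.Perm α) : Equiv.Perm (Lvl α n) where
  toFun A := ⟨A.1.map σ.toEmbedding, by rw [Finset.card_map, A.2]⟩
  invFun A := ⟨A.1.map σ.symm.toEmbedding, by rw [Finset.card_map, A.2]⟩
  left_inv A := Subtype.ext (by simp [Finset.map_map])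
  right_inv A := Subtype.ext (by simp [Finset.map_map])

lemma johnson_perm (n : ℕ) (σ : Equiv.Perm α) (A B : Lvl α n) :
    johnson α n (permLvl n σ A) (permLvl n σ B) = johnson α n A B := by
  simp only [johnson, Matrix.of_apply, (permLvl n σ).injective.eq_iff]
  simp only [permLvl, Equiv.coe_fn_mk, ← Finset.map_inter, Finset.card_map]

variable [Fintype α]

/-- Neighbours of `A` in the Johnson graph are the exchanges `A \ {a} ∪ {b}` with `a ∈ A`, `b ∉ A`. -/
lemma sum_johnson {n : ℕ} (A : Lvl α n) (f : Finset α → ℝ) :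
    ∑ B, johnson α n A B * f B.1
      = n * f A.1 + ∑ a ∈ A.1, ∑ b ∈ A.1ᶜ, f (insert b (A.1.erase a)) := by
  have h1 : ∀ B : Lvl α n, johnson α n A B * f B.1
      = (if A = B then n * f B.1 else 0)
        + (if (A.1 ∩ B.1).card + 1 = n then f B.1 else 0) := by
    intro B
    simp only [johnson, Matrix.of_apply]
    split_ifs with h h'
    · subst h
      simp [A.2] at h'
    all_goals simp
  simp only [h1, Finset.sum_add_distrib, Finset.sum_ite_eq, Finset.mem_univ, if_true]
  congr 1
  rw [← Finset.sum_filter, ← Finset.sum_product']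
  symm
  have hcard : ∀ p ∈ A.1 ×ˢ A.1ᶜ, (insert p.2 (A.1.erase p.1)).card = n := by
    intro p hp
    simp only [Finset.mem_product, Finset.mem_compl] at hp
    have : 0 < A.1.card := Finset.card_pos.2 ⟨_, hp.1⟩
    rw [Finset.card_insert_of_notMem (by simp [hp.2]), Finset.card_erase_of_mem hp.1, A.2]
    rw [A.2] at this
    omega
  refine Finset.sum_bij (fun p hp => ⟨insert p.2 (A.1.erase p.1), hcard p hp⟩) ?_ ?_ ?_ ?_
  · intro p hp
    have hp' := hp
    simp only [Finset.mem_product, Finset.mem_compl] at hp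
    have : 0 < A.1.card := Finset.card_pos.2 ⟨_, hp.1⟩
    simp only [Finset.mem_filter, Finset.mem_univ, true_and]
    rw [Finset.inter_insert_of_notMem hp.2, Finset.inter_eq_right.2 (Finset.erase_subset _ _),
      Finset.card_erase_of_mem hp.1, A.2]
    rw [A.2] at this
    omega
  · rintro ⟨a, b⟩ hp ⟨c, d⟩ hq h
    simp only [Finset.mem_product, Finset.mem_compl] at hp hq
    have h2 : insert b (A.1.erase a) = insert d (A.1.erase c) := congrArg Subtype.val h
    have hb : b ∈ insert d (A.1.erase c) := h2 ▸ Finset.mem_insert_self _ _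
    have hbd : b = d := by
      rcases Finset.mem_insert.1 hb with h | h
      · exact h
      · exact absurd (Finset.mem_of_mem_erase h) hp.2
    have ha : a ∉ insert d (A.1.erase c) := by
      rw [← h2]
      simp only [Finset.mem_insert, Finset.mem_erase, ne_eq, not_true_eq_false, false_and, or_false]
      rintro rfl
      exact hp.2 hp.1
    have hac : a = c := by
      by_contra hne
      exact ha (Finset.mem_insert_of_mem (Finset.mem_erase.2 ⟨hne, hp.1⟩))
    rw [hbd, hac]
  · intro B hB
    simp only [Finset.mem_filter, Finset.mem_univ, true_and] at hB
    have c1 : (A.1 \ B.1).card = 1 := by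
      have := Finset.card_sdiff_add_card_inter A.1 B.1
      rw [A.2] at this; omega
    have c2 : (B.1 \ A.1).card = 1 := by
      have := Finset.card_sdiff_add_card_inter B.1 A.1
      rw [B.2, Finset.inter_comm] at this; omega
    obtain ⟨a, ha⟩ := Finset.card_eq_one.1 c1
    obtain ⟨b, hb⟩ := Finset.card_eq_one.1 c2
    have ha' : ∀ x, (x ∈ A.1 ∧ x ∉ B.1) ↔ x = a := by
      intro x; rw [← Finset.mem_sdiff, ha, Finset.mem_singleton]
    have hb' : ∀ x, (x ∈ B.1 ∧ x ∉ A.1) ↔ x = b := by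
      intro x; rw [← Finset.mem_sdiff, hb, Finset.mem_singleton]
    refine ⟨(a, b), ?_, Subtype.ext ?_⟩
    · have := (ha' a).2 rfl
      have := (hb' b).2 rfl
      simp only [Finset.mem_product, Finset.mem_compl]
      tauto
    · ext x
      simp only [Finset.mem_insert, Finset.mem_erase, ne_eq, ← ha', ← hb']
      tauto
  · intros
    rfl

/-- Transition matrix of the exclusion walk on `n`-subsets of `α`: a uniform element is removed and
replaced by a uniform element of the `N - n + 1` vacant ones, which include the one just removed. -/
def walk (α : Type*) [Fintype α] [DecidableEq α] (n : ℕ) : Matrix (Lvl α n) (Lvl α n) ℝ :=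
  ((n : ℝ) * ((Fintype.card α : ℝ) - n + 1))⁻¹ • johnson α n

lemma walk_row_sum {n : ℕ} (hn : 1 ≤ n) (A : Lvl α n) : ∑ B, walk α n A B = 1 := by
  have h := sum_johnson A (fun _ => 1)
  have hle := lvl_le A
  have hle' : (n : ℝ) ≤ Fintype.card α := by exact_mod_cast hle
  simp only [mul_one, Finset.sum_const, Finset.card_compl, A.2, nsmul_eq_mul,
    Nat.cast_sub hle] at h
  simp only [walk, Matrix.smul_apply, smul_eq_mul, ← Finset.mul_sum, h]
  have : (n : ℝ) ≠ 0 := by positivity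
  have : (Fintype.card α : ℝ) - n + 1 ≠ 0 := by linarith
  field_simp
  ring

lemma walk_pow_row_sum {n : ℕ} (hn : 1 ≤ n) (t : ℕ) (A : Lvl α n) :
    ∑ B, (walk α n ^ t) A B = 1 := by
  induction t with
  | zero => simp [Matrix.one_apply]
  | succ t ih =>
    simp only [pow_succ, Matrix.mul_apply]
    rw [Finset.sum_comm]
    simp only [← Finset.mul_sum, walk_row_sum hn, mul_one, ih]

lemma exists_perm {n : ℕ} (A B : Lvl α n) :
    ∃ σ : Equiv.Perm α, A.1.map σ.toEmbedding = B.1 := by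
  have hc : Fintype.card {x // x ∈ A.1} = Fintype.card {x // x ∈ B.1} := by
    simp [A.2, B.2]
  let e : {x // x ∈ A.1} ≃ {x // x ∈ B.1} := Fintype.equivOfCardEq hc
  refine ⟨e.extendSubtype, Finset.eq_of_subset_of_card_le ?_ ?_⟩
  · intro y hy
    obtain ⟨x, hx, rfl⟩ := Finset.mem_map.1 hy
    exact e.extendSubtype_mem x hx
  · rw [Finset.card_map, A.2, B.2]

lemma johnson_pow_perm (n k : ℕ) (σ : Equiv.Perm α) (A B : Lvl α n) :
    (johnson α n ^ k) (permLvl n σ A) (permLvl n σ B) = (johnson α n ^ k) A B := by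
  induction k generalizing B with
  | zero => simp [Matrix.one_apply]
  | succ k ih =>
    simp only [pow_succ, Matrix.mul_apply]
    rw [← Equiv.sum_comp (permLvl n σ)]
    simp only [ih, johnson_perm]

/-- By transitivity of the permutation action all diagonal entries of a power agree. -/
lemma card_mul_johnson_pow_diag (n k : ℕ) (A : Lvl α n) :
    (Fintype.card (Lvl α n) : ℝ) * (johnson α n ^ k) A A = (johnson α n ^ k).trace := by
  have h : ∀ B : Lvl α n, (johnson α n ^ k) B B = (johnson α n ^ k) A A := by
    intro B
    obtain ⟨σ, hσ⟩ := exists_perm A B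
    have hB : permLvl n σ A = B := Subtype.ext hσ
    rw [← hB, johnson_pow_perm]
  simp [Matrix.trace, h]

lemma walk_pow_diag {n : ℕ} (hn : 1 ≤ n) (t : ℕ) (A : Lvl α n) :
    (Fintype.card (Lvl α n) : ℝ) * (walk α n ^ (2 * t)) A A
      ≤ Real.exp (Fintype.card α *
        Real.exp (-(2 * t * (1 / n + 1 / ((Fintype.card α : ℝ) - n + 1))))) := by
  have hle := lvl_le A
  have hle' : (n : ℝ) ≤ Fintype.card α := by exact_mod_cast hle
  have hpos : 0 < (n : ℝ) * ((Fintype.card α : ℝ) - n + 1) :=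
    mul_pos (by exact_mod_cast hn) (by linarith)
  have htr := trace_johnson (α := α) n (Polynomial.X ^ (2 * t))
  simp only [map_pow, Polynomial.aeval_X, Polynomial.eval_pow, Polynomial.eval_X] at htr
  have hb := trace_bound hn hle t
  rw [← htr, ← card_mul_johnson_pow_diag n (2 * t) A] at hb
  rw [walk, smul_pow, Matrix.smul_apply, smul_eq_mul, inv_pow, mul_left_comm,
    inv_mul_le_iff₀ (by positivity)]
  exact hb

/-- `L¹` distance to uniformity, by Cauchy–Schwarz and
`∑ B, (P ^ t) A B ^ 2 = (P ^ (2 t)) A A` for the symmetric matrix `P`. -/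
lemma walk_l1 {n : ℕ} (hn : 1 ≤ n) (t : ℕ) (A : Lvl α n) :
    ∑ B, |(walk α n ^ t) A B - 1 / (Fintype.card (Lvl α n) : ℝ)|
      ≤ Real.sqrt (Real.exp (Fintype.card α *
        Real.exp (-(2 * t * (1 / n + 1 / ((Fintype.card α : ℝ) - n + 1))))) - 1) := by
  apply Real.le_sqrt_of_sq_le
  have : Nonempty (Lvl α n) := ⟨A⟩
  set K : ℝ := (Fintype.card (Lvl α n) : ℝ) with hK
  have hKpos : 0 < K := by rw [hK]; exact_mod_cast Fintype.card_pos
  have hsymm : (walk α n ^ t).transpose = walk α n ^ t := by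
    rw [Matrix.transpose_pow, walk, Matrix.transpose_smul, johnson_transpose]
  have hsq : ∑ B, (walk α n ^ t) A B ^ 2 = (walk α n ^ (2 * t)) A A := by
    rw [two_mul, pow_add, Matrix.mul_apply]
    refine Finset.sum_congr rfl fun B _ => ?_
    rw [sq]
    congr 1
    conv_lhs => rw [← hsymm]
    rfl
  have hexp : ∑ B, ((walk α n ^ t) A B - 1 / K) ^ 2 = (walk α n ^ (2 * t)) A A - 1 / K := by
    simp only [sub_sq, Finset.sum_add_distrib, Finset.sum_sub_distrib, hsq]
    rw [← Finset.sum_mul, ← Finset.mul_sum, walk_pow_row_sum hn]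
    simp only [Finset.sum_const, Finset.card_univ, nsmul_eq_mul, ← hK]
    field_simp
    ring
  have hcs := sq_sum_le_card_mul_sum_sq (s := (Finset.univ : Finset (Lvl α n)))
    (f := fun B => |(walk α n ^ t) A B - 1 / K|)
  simp only [sq_abs, hexp, Finset.card_univ, ← hK] at hcs
  have := walk_pow_diag hn t A
  rw [← hK] at this
  rw [mul_sub, mul_one_div_cancel hKpos.ne'] at hcs
  linarith

end Walk

/-! ### Projection to load profiles -/

/-- Number of slots of block `v` occupied by `A`. -/
def occ {Q kap : ℕ} (A : Finset (Fin Q × Fin kap)) (v : Fin Q) : ℕ :=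
  (A.filter fun p => p.1 = v).card

lemma occ_add_occ_compl {Q kap : ℕ} (A : Finset (Fin Q × Fin kap)) (v : Fin Q) :
    occ A v + occ Aᶜ v = kap := by
  have h1 : (Finset.univ.filter fun p : Fin Q × Fin kap => p.1 = v).card = kap := by
    have : (Finset.univ.filter fun p : Fin Q × Fin kap => p.1 = v)
        = ({v} : Finset (Fin Q)) ×ˢ Finset.univ := by
      ext p
      rw [Finset.mem_filter, Finset.mem_product]
      simp
    rw [this]; simp
  conv_rhs => rw [← h1, ← Finset.union_compl A, Finset.filter_union]
  rw [Finset.card_union_of_disjoint]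
  · rfl
  · exact Finset.disjoint_filter_filter disjoint_compl_right

lemma occ_le {Q kap : ℕ} (A : Finset (Fin Q × Fin kap)) (v : Fin Q) : occ A v ≤ kap := by
  have := occ_add_occ_compl A v
  omega

lemma sum_occ {Q kap : ℕ} (A : Finset (Fin Q × Fin kap)) : ∑ v, occ A v = A.card :=
  (Finset.card_eq_sum_card_fiberwise (fun _ _ => Finset.mem_coe.2 (Finset.mem_univ _))).symm

lemma sum_fst {Q kap : ℕ} (A : Finset (Fin Q × Fin kap)) (h : Fin Q → ℝ) :
    ∑ a ∈ A, h a.1 = ∑ v, (occ A v : ℝ) * h v := by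
  rw [← Finset.sum_fiberwise A (fun p => p.1)]
  refine Finset.sum_congr rfl fun v _ => ?_
  rw [Finset.sum_congr rfl (g := fun _ => h v)]
  · simp [occ]
  · intro p hp
    rw [(Finset.mem_filter.1 hp).2]

lemma occ_swap {Q kap : ℕ} {A : Finset (Fin Q × Fin kap)} {a b : Fin Q × Fin kap}
    (ha : a ∈ A) (hb : b ∉ A) (v : Fin Q) :
    occ (insert b (A.erase a)) v + (if a.1 = v then 1 else 0)
      = occ A v + (if b.1 = v then 1 else 0) := by
  have hb' : b ∉ A.erase a := fun h => hb (Finset.mem_of_mem_erase h)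
  unfold occ
  simp only [Finset.card_filter]
  rw [Finset.sum_insert hb', ← Finset.add_sum_erase A _ ha]
  ring

/-- The load profile of a set of occupied slots. -/
def prof {Q kap n : ℕ} (A : Lvl (Fin Q × Fin kap) n) : LoadState Q kap n :=
  ⟨fun v => ⟨occ A.1 v, Nat.lt_succ_of_le (occ_le A.1 v)⟩, by
    simp only [sum_occ, A.2]⟩

lemma prof_eq_iff {Q kap n : ℕ} (A : Lvl (Fin Q × Fin kap) n) (xi : LoadState Q kap n) :
    prof A = xi ↔ ∀ v, occ A.1 v = (xi.1 v : ℕ) := by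
  rw [Subtype.ext_iff, funext_iff]
  simp only [Fin.ext_iff, prof]

/-- The load profile chain is the projection of the exclusion walk under `prof`. -/
lemma lump {Q kap n : ℕ} (A : Lvl (Fin Q × Fin kap) n)
    (xi' : LoadState Q kap n) :
    ∑ B, (if prof B = xi' then walk (Fin Q × Fin kap) n A B else 0) = loadP Q kap n (prof A) xi' := by
  have hle : n ≤ kap * Q := by
    have := lvl_le A
    simpa [mul_comm] using this
  have hM : ((1 + kap * Q - n : ℕ) : ℝ) = (Fintype.card (Fin Q × Fin kap) : ℝ) - n + 1 := by
    rw [Nat.cast_sub (by omega)]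
    simp only [Fintype.card_prod, Fintype.card_fin]
    push_cast
    ring
  have hval : ∀ v, ((prof A).1 v : ℕ) = occ A.1 v := fun v => rfl
  have hoc : ∀ v, ((kap - occ A.1 v : ℕ) : ℝ) = occ A.1ᶜ v := by
    intro v
    have := occ_add_occ_compl A.1 v
    congr 1
    omega
  have key := sum_johnson A (fun S => if ∀ v, occ S v = (xi'.1 v : ℕ) then 1 else 0)
  have hL : ∑ B, (if prof B = xi' then walk (Fin Q × Fin kap) n A B else 0)
      = (∑ B, johnson (Fin Q × Fin kap) n A B *
          (if ∀ v, occ B.1 v = (xi'.1 v : ℕ) then 1 else 0))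
        / ((n : ℝ) * ((1 + kap * Q - n : ℕ) : ℝ)) := by
    rw [hM, div_eq_inv_mul, Finset.mul_sum]
    refine Finset.sum_congr rfl fun B _ => ?_
    simp only [prof_eq_iff, walk, Matrix.smul_apply, smul_eq_mul]
    split_ifs <;> simp
  rw [hL, key]
  unfold loadP
  split_ifs with h1 h0 h0
  · congr 1
    subst h0
    have hsw : ∀ a ∈ A.1, ∀ b ∈ A.1ᶜ,
        (if ∀ v, occ (insert b (A.1.erase a)) v = ((prof A).1 v : ℕ) then (1 : ℝ) else 0)
          = if a.1 = b.1 then 1 else 0 := by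
      intro a ha b hb
      have hs := occ_swap ha (Finset.mem_compl.1 hb)
      congr 1
      rw [eq_iff_iff]
      constructor
      · intro h
        have h2 := hs a.1
        rw [h, hval] at h2
        by_contra hne
        rw [if_pos rfl, if_neg (fun e => hne e.symm)] at h2
        omega
      · intro h v
        have h2 := hs v
        rw [h] at h2
        rw [hval]
        omega
    rw [Finset.sum_congr rfl fun a ha => Finset.sum_congr rfl (hsw a ha)]
    have e1 : ∀ a : Fin Q × Fin kap,
        ∑ b ∈ A.1ᶜ, (if a.1 = b.1 then (1 : ℝ) else 0) = occ A.1ᶜ a.1 := by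
      intro a
      rw [sum_fst A.1ᶜ (fun w => if a.1 = w then (1 : ℝ) else 0)]
      simp
    simp only [e1]
    rw [sum_fst A.1 (fun w => (occ A.1ᶜ w : ℝ))]
    have e2 : (n : ℝ) = ∑ v, (occ A.1 v : ℝ) := by
      rw [← Nat.cast_sum, sum_occ, A.2]
    rw [mul_one, e2, ← Finset.sum_add_distrib]
    refine Finset.sum_congr rfl fun v _ => ?_
    rw [hval]
    have h3 := occ_add_occ_compl A.1 v
    have h4 : 1 + kap - occ A.1 v = 1 + occ A.1ᶜ v := by omega
    rw [h4]
    push_cast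
    ring
  · exact absurd ((prof_eq_iff A xi').2 h1).symm h0
  · exact absurd ((prof_eq_iff A xi').1 h0.symm) h1
  · congr 1
    rw [mul_zero, zero_add]
    have hsw : ∀ a ∈ A.1, ∀ b ∈ A.1ᶜ,
        (if ∀ v, occ (insert b (A.1.erase a)) v = (xi'.1 v : ℕ) then (1 : ℝ) else 0)
          = if a.1 ≠ b.1 ∧ (xi'.1 a.1 : ℕ) + 1 = ((prof A).1 a.1 : ℕ) ∧
            (xi'.1 b.1 : ℕ) = ((prof A).1 b.1 : ℕ) + 1 ∧
            (∀ v, v ≠ a.1 → v ≠ b.1 → xi'.1 v = (prof A).1 v) then 1 else 0 := by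
      intro a ha b hb
      have hs := occ_swap ha (Finset.mem_compl.1 hb)
      congr 1
      rw [eq_iff_iff]
      constructor
      · intro h
        have hne : a.1 ≠ b.1 := by
          intro heq
          apply h1
          intro v
          have h2 := hs v
          rw [heq, h] at h2
          omega
        refine ⟨hne, ?_, ?_, ?_⟩
        · have h2 := hs a.1
          rw [h, if_pos rfl, if_neg hne.symm] at h2
          rw [hval]; omega
        · have h2 := hs b.1
          rw [h, if_pos rfl, if_neg hne] at h2
          rw [hval]; omega
        · intro v hva hvb
          have h2 := hs v
          rw [h, if_neg hva.symm, if_neg hvb.symm] at h2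
          rw [Fin.ext_iff, hval]; omega
      · rintro ⟨hne, h2, h3, h4⟩ v
        have h5 := hs v
        rw [hval] at h2 h3
        by_cases hva : v = a.1
        · subst hva
          rw [if_pos rfl, if_neg hne.symm] at h5
          omega
        · by_cases hvb : v = b.1
          · subst hvb
            rw [if_pos rfl, if_neg hne] at h5
            omega
          · have h6 := h4 v hva hvb
            rw [Fin.ext_iff, hval] at h6
            rw [if_neg (Ne.symm hva), if_neg (Ne.symm hvb)] at h5
            omega
    rw [Finset.sum_congr rfl fun a ha => Finset.sum_congr rfl (hsw a ha)]
    set g : Fin Q → Fin Q → ℝ := fun vm vp =>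
      if vm ≠ vp ∧ (xi'.1 vm : ℕ) + 1 = ((prof A).1 vm : ℕ) ∧
            (xi'.1 vp : ℕ) = ((prof A).1 vp : ℕ) + 1 ∧
            (∀ v, v ≠ vm → v ≠ vp → xi'.1 v = (prof A).1 v) then 1 else 0 with hg
    have e1 : ∀ a : Fin Q × Fin kap,
        ∑ b ∈ A.1ᶜ, g a.1 b.1 = ∑ vp, (occ A.1ᶜ vp : ℝ) * g a.1 vp := fun a =>
      sum_fst A.1ᶜ (g a.1)
    change ∑ a ∈ A.1, ∑ b ∈ A.1ᶜ, g a.1 b.1 = _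
    simp only [e1]
    rw [sum_fst A.1 (fun vm => ∑ vp, (occ A.1ᶜ vp : ℝ) * g vm vp)]
    refine Finset.sum_congr rfl fun vm _ => ?_
    rw [Finset.mul_sum]
    refine Finset.sum_congr rfl fun vp _ => ?_
    simp only [hg, hval, hoc]
    split_ifs <;> ring

lemma evolve_lift {Q kap n : ℕ} (A : Lvl (Fin Q × Fin kap) n) (t : ℕ)
    (xi : LoadState Q kap n) :
    evolve (loadP Q kap n) (delta (prof A)) t xi
      = ∑ B, (if prof B = xi then (walk (Fin Q × Fin kap) n ^ t) A B else 0) := by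
  induction t generalizing xi with
  | zero =>
    simp only [evolve, delta, pow_zero, Matrix.one_apply]
    rw [Finset.sum_eq_single A]
    · simp [eq_comm]
    · intro B _ hB
      simp [hB.symm]
    · simp
  | succ t ih =>
    simp only [evolve, ih, Finset.sum_mul, ite_mul, zero_mul]
    rw [Finset.sum_comm]
    simp only [Finset.sum_ite_eq, Finset.mem_univ, if_true, ← lump, Finset.mul_sum, mul_ite,
      mul_zero]
    rw [Finset.sum_comm]
    refine Finset.sum_congr rfl fun C _ => ?_
    split_ifs
    · rw [pow_succ, Matrix.mul_apply]
    · simp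

lemma card_fiber {Q kap n : ℕ} (xi : LoadState Q kap n) :
    (Finset.univ.filter fun B : Lvl (Fin Q × Fin kap) n => prof B = xi).card
      = ∏ v, kap.choose (xi.1 v : ℕ) := by
  have h1 : ∏ v, kap.choose (xi.1 v : ℕ)
      = (Fintype.piFinset fun v : Fin Q =>
          Finset.powersetCard (xi.1 v : ℕ) (Finset.univ : Finset (Fin kap))).card := by
    simp [Fintype.card_piFinset]
  rw [h1]
  have hocc : ∀ (B : Finset (Fin Q × Fin kap)) (v : Fin Q),
      (Finset.univ.filter fun j => (v, j) ∈ B).card = occ B v := by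
    intro B v
    refine Finset.card_bij (fun j _ => (v, j)) ?_ ?_ ?_
    · intro j hj
      simpa using hj
    · intro j _ k _ h
      exact (Prod.mk.inj h).2
    · rintro ⟨w, j⟩ hp
      simp only [Finset.mem_filter] at hp
      obtain ⟨hp, rfl⟩ := hp
      exact ⟨j, by simpa using hp, rfl⟩
  refine Finset.card_bij (fun B _ v => Finset.univ.filter fun j => (v, j) ∈ B.1) ?_ ?_ ?_
  · intro B hB
    simp only [Finset.mem_filter, Finset.mem_univ, true_and, prof_eq_iff] at hB
    simp only [Fintype.mem_piFinset, Finset.mem_powersetCard, Finset.subset_univ, true_and, hocc]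
    exact hB
  · intro B _ C _ h
    refine Subtype.ext (Finset.ext ?_)
    rintro ⟨v, j⟩
    have := congrArg (fun s => j ∈ s) (congrFun h v)
    simpa using this
  · intro g hg
    simp only [Fintype.mem_piFinset, Finset.mem_powersetCard, Finset.subset_univ, true_and] at hg
    have ho : ∀ v, occ (Finset.univ.filter fun p : Fin Q × Fin kap => p.2 ∈ g p.1) v
        = (xi.1 v : ℕ) := by
      intro v
      rw [← hocc, ← hg v]
      congr 1
      ext j
      simp
    refine ⟨⟨Finset.univ.filter fun p => p.2 ∈ g p.1, ?_⟩, ?_, ?_⟩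
    · rw [← sum_occ]
      simp only [ho]
      exact xi.2
    · simp only [Finset.mem_filter, Finset.mem_univ, true_and, prof_eq_iff]
      exact ho
    · funext v
      ext j
      simp

lemma exists_lift {Q kap n : ℕ} (xi : LoadState Q kap n) :
    ∃ A : Lvl (Fin Q × Fin kap) n, prof A = xi := by
  have h : 0 < (Finset.univ.filter fun B : Lvl (Fin Q × Fin kap) n => prof B = xi).card := by
    rw [card_fiber]
    exact Finset.prod_pos fun v _ => Nat.choose_pos (Nat.lt_succ_iff.1 (xi.1 v).2)
  obtain ⟨A, hA⟩ := Finset.card_pos.1 h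
  exact ⟨A, (Finset.mem_filter.1 hA).2⟩

lemma loadWeight_eq {Q kap n : ℕ} (xi : LoadState Q kap n) :
    loadWeight Q kap n xi
      = ((Finset.univ.filter fun B : Lvl (Fin Q × Fin kap) n => prof B = xi).card : ℝ)
        / (kap.factorial : ℝ) ^ Q := by
  rw [card_fiber]
  have : ((kap.factorial : ℝ)) ^ Q = ∏ _v : Fin Q, (kap.factorial : ℝ) := by simp
  rw [this, Nat.cast_prod, ← Finset.prod_div_distrib]
  refine Finset.prod_congr rfl fun v _ => ?_
  rw [Nat.cast_choose ℝ (Nat.lt_succ_iff.1 (xi.1 v).2)]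
  have h1 : (kap.factorial : ℝ) ≠ 0 := by positivity
  have h2 : (((xi.1 v : ℕ)).factorial : ℝ) ≠ 0 := by positivity
  have h3 : ((kap - (xi.1 v : ℕ)).factorial : ℝ) ≠ 0 := by positivity
  field_simp

/-- `loadPi` is the image of the uniform distribution on `n`-subsets under `prof`. -/
lemma loadPi_eq {Q kap n : ℕ} (xi : LoadState Q kap n) :
    loadPi Q kap n xi
      = ∑ B : Lvl (Fin Q × Fin kap) n,
          (if prof B = xi then 1 / (Fintype.card (Lvl (Fin Q × Fin kap) n) : ℝ) else 0) := by
  have hs : ∑ eta : LoadState Q kap n, loadWeight Q kap n eta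
      = (Fintype.card (Lvl (Fin Q × Fin kap) n) : ℝ) / (kap.factorial : ℝ) ^ Q := by
    simp only [loadWeight_eq]
    rw [← Finset.sum_div, ← Nat.cast_sum, ← Finset.card_univ]
    congr 2
    exact (Finset.card_eq_sum_card_fiberwise (fun _ _ => Finset.mem_coe.2 (Finset.mem_univ _))).symm
  have h1 : (kap.factorial : ℝ) ^ Q ≠ 0 := by positivity
  rw [loadPi, hs, loadWeight_eq, div_div_div_cancel_right₀ h1, ← Finset.sum_filter,
    Finset.sum_const, nsmul_eq_mul]
  ring

lemma DTV_le {Q kap n : ℕ} (hn : 1 ≤ n) (t : ℕ) :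
    DTV (loadP Q kap n) (loadPi Q kap n) t
      ≤ Real.sqrt (Real.exp ((kap * Q : ℕ) *
        Real.exp (-(2 * t * (1 / n + 1 / (((kap * Q : ℕ) : ℝ) - n + 1))))) - 1) := by
  refine Real.iSup_le (fun xi => Real.iSup_le (fun F => ?_) (Real.sqrt_nonneg _))
    (Real.sqrt_nonneg _)
  obtain ⟨A, rfl⟩ := exists_lift xi
  have hc : Fintype.card (Fin Q × Fin kap) = kap * Q := by simp [mul_comm]
  have h := walk_l1 hn t A
  rw [hc] at h
  refine le_trans ?_ h
  simp only [evolve_lift, loadPi_eq, ← Finset.sum_sub_distrib]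
  rw [Finset.sum_comm]
  refine (Finset.abs_sum_le_sum_abs _ _).trans (Finset.sum_le_sum fun B _ => ?_)
  have : ∀ y : LoadState Q kap n,
      ((if prof B = y then (walk (Fin Q × Fin kap) n ^ t) A B else 0)
        - (if prof B = y then 1 / (Fintype.card (Lvl (Fin Q × Fin kap) n) : ℝ) else 0))
      = if prof B = y then (walk (Fin Q × Fin kap) n ^ t) A B
        - 1 / (Fintype.card (Lvl (Fin Q × Fin kap) n) : ℝ) else 0 := by
    intro y; split_ifs <;> simp
  simp only [this, Finset.sum_ite_eq]
  split_ifs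
  · exact le_rfl
  · simp

lemma DTV_nonneg {X : Type*} [Fintype X] (p : X → X → ℝ) (pi : X → ℝ) (t : ℕ) :
    0 ≤ DTV p pi t :=
  Real.iSup_nonneg fun _ => Real.iSup_nonneg fun _ => abs_nonneg _

/-! ### Conclusion -/

/-- At time `t_N + α N` the exponent in `DTV_le` is controlled uniformly in `N`. The rounding in
`n = ⌊ρ N⌋` costs at most `2 log N / ((1 - ρ) N) ≤ 2 / (1 - ρ)`. -/
lemma exponent_bound {rho al N : ℝ} {n t : ℕ} (h0 : 0 < rho) (h1 : rho < 1) (hal : 0 ≤ al)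
    (hn : 1 ≤ n) (hn1 : (n : ℝ) ≤ rho * N) (hn2 : rho * N < n + 1)
    (ht : (1/2) * (1 - rho) * rho * N * Real.log N + al * N ≤ t) :
    N * Real.exp (-(2 * t * (1 / n + 1 / (N - n + 1)))) ≤ Real.exp (2 / (1 - rho) - 2 * al) := by
  have hn' : (1 : ℝ) ≤ n := by exact_mod_cast hn
  have hN : 1 ≤ N := by nlinarith
  have hr : 0 < 1 - rho := by linarith
  have hlog0 : 0 ≤ Real.log N := Real.log_nonneg hN
  have hlogN : Real.log N ≤ N := (Real.log_le_sub_one_of_pos (by linarith)).trans (by linarith)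
  have hM0 : 0 < N - n + 1 := by nlinarith
  have hM : N - n + 1 ≤ (1 - rho) * N + 2 := by linarith
  have hD : 0 < (1 - rho) * N + 2 := by positivity
  have hinv : 1 / (rho * N) + 1 / ((1 - rho) * N + 2) ≤ 1 / n + 1 / (N - n + 1) := by
    gcongr
  have hmain : Real.log N + 2 * al - 2 / (1 - rho)
      ≤ 2 * t * (1 / n + 1 / (N - n + 1)) := by
    have h2t : ((1 - rho) * rho * Real.log N + 2 * al) * N ≤ 2 * t := by linarith
    have e : ((1 - rho) * rho * Real.log N + 2 * al) * N
          * (1 / (rho * N) + 1 / ((1 - rho) * N + 2))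
        = Real.log N - 2 * rho * Real.log N / ((1 - rho) * N + 2)
          + 2 * al * (1 / rho) + 2 * al * (N / ((1 - rho) * N + 2)) := by
      field_simp
      ring
    have e1 : 2 * rho * Real.log N / ((1 - rho) * N + 2) ≤ 2 / (1 - rho) := by
      rw [div_le_div_iff₀ hD hr]
      nlinarith [mul_nonneg hr.le hlog0, mul_le_mul_of_nonneg_left hlogN hr.le,
        mul_nonneg hr.le (mul_nonneg hr.le hlog0)]
    have e2 : 2 * al ≤ 2 * al * (1 / rho) := by
      have : 1 ≤ 1 / rho := by rw [le_div_iff₀ h0]; linarith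
      nlinarith
    have e3 : 0 ≤ 2 * al * (N / ((1 - rho) * N + 2)) := by positivity
    calc Real.log N + 2 * al - 2 / (1 - rho)
        ≤ ((1 - rho) * rho * Real.log N + 2 * al) * N
          * (1 / (rho * N) + 1 / ((1 - rho) * N + 2)) := by rw [e]; linarith
      _ ≤ 2 * t * (1 / n + 1 / (N - n + 1)) := by gcongr
  calc N * Real.exp (-(2 * t * (1 / n + 1 / (N - n + 1))))
      ≤ N * Real.exp (-(Real.log N + 2 * al - 2 / (1 - rho))) := by gcongr
    _ = Real.exp (Real.log N) * Real.exp (-(Real.log N + 2 * al - 2 / (1 - rho))) := by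
        rw [Real.exp_log (by linarith)]
    _ = _ := by rw [← Real.exp_add]; congr 1; ring

/-- upper bound for the load profile chain (Theorem 2.5):
`lim_{alpha→∞} limsup_{N→∞} D_TV(t_N + ⌈alpha N⌉) = 0`. -/
theorem statement6 (Q : Nat) (hQ : 2 ≤ Q) (rho : Real) (hrho0 : 0 < rho) (hrho1 : rho < 1) :
    Filter.Tendsto (fun al : Real =>
        Filter.limsup (fun kap : Nat =>
            DTV (loadP Q kap (⌊rho * ((kap * Q : Nat) : Real)⌋₊))
              (loadPi Q kap (⌊rho * ((kap * Q : Nat) : Real)⌋₊))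
              (⌈(1/2) * (1 - rho) * rho * ((kap * Q : Nat) : Real)
                  * Real.log ((kap * Q : Nat) : Real)⌉₊
                + ⌈al * ((kap * Q : Nat) : Real)⌉₊))
          Filter.atTop)
      Filter.atTop (nhds 0) := by
  set bd : ℝ → ℝ := fun al => Real.sqrt (Real.exp (Real.exp (2 / (1 - rho) - 2 * al)) - 1) with hbd
  have hlim : Tendsto bd atTop (nhds 0) := by
    have h1 : Tendsto (fun al : ℝ => 2 / (1 - rho) - 2 * al) atTop atBot :=
      tendsto_atBot_add_const_left _ _
        (tendsto_neg_atTop_atBot.comp (tendsto_id.const_mul_atTop (by norm_num : (0:ℝ) < 2)))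
    have h2 : Tendsto (fun al : ℝ => Real.exp (2 / (1 - rho) - 2 * al)) atTop (nhds 0) :=
      Real.tendsto_exp_atBot.comp h1
    have h3 := (((Real.continuous_exp.tendsto 0).comp h2).sub_const 1).sqrt
    simpa using h3
  have hev : ∀ al : ℝ, 0 ≤ al → ∀ᶠ kap : ℕ in atTop,
      DTV (loadP Q kap (⌊rho * ((kap * Q : Nat) : Real)⌋₊))
              (loadPi Q kap (⌊rho * ((kap * Q : Nat) : Real)⌋₊))
              (⌈(1/2) * (1 - rho) * rho * ((kap * Q : Nat) : Real)
                  * Real.log ((kap * Q : Nat) : Real)⌉₊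
                + ⌈al * ((kap * Q : Nat) : Real)⌉₊) ≤ bd al := by
    intro al hal
    filter_upwards [eventually_ge_atTop ⌈1 / rho⌉₊] with kap hkap
    have hk : 1 / rho ≤ kap := Nat.ceil_le.1 hkap
    have hNk : (kap : ℝ) ≤ ((kap * Q : ℕ) : ℝ) := by
      exact_mod_cast Nat.le_mul_of_pos_right kap (by omega)
    have hrN : 1 ≤ rho * ((kap * Q : ℕ) : ℝ) := by
      have := hk.trans hNk
      rwa [div_le_iff₀ hrho0, mul_comm] at this
    have hn : 1 ≤ ⌊rho * ((kap * Q : ℕ) : ℝ)⌋₊ := Nat.le_floor (by simpa using hrN)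
    refine (DTV_le hn _).trans ?_
    refine Real.sqrt_le_sqrt (sub_le_sub_right (Real.exp_le_exp.2 ?_) 1)
    refine exponent_bound hrho0 hrho1 hal hn (Nat.floor_le (by linarith)) (Nat.lt_floor_add_one _) ?_
    push_cast
    exact add_le_add (by simpa using Nat.le_ceil _) (by simpa using Nat.le_ceil _)
  refine squeeze_zero' ?_ ?_ hlim
  · filter_upwards [eventually_ge_atTop 0] with al hal
    refine le_limsup_of_frequently_le (Eventually.of_forall fun kap => DTV_nonneg _ _ _).frequently
      ?_
    exact ⟨bd al, by simpa using hev al hal⟩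
  · filter_upwards [eventually_ge_atTop 0] with al hal
    refine limsup_le_of_le ?_ (hev al hal)
    exact isCoboundedUnder_le_of_le atTop (x := 0) fun kap => DTV_nonneg _ _ _

end CongestionPaper
end
end

section
/- For all positive integers n, all σ₀ ∈ 𝒮_n and all t ∈ ℤ₊, the congestion dynamics satisfies ‖ P_{σ₀}(σ(t) ∈ ·) − μ_n ‖_TV = ‖ P_{σ₀}( ξ^{σ₀}(t) ∈ · ) − μ̄_n^{σ₀} ‖_TV, where ξ^{σ₀}(t) = ξ^{σ₀}(σ(t)) is the load matrix of σ(t) relative to σ₀ and μ̄_n^{σ₀} is the pushforward of μ_n under the map σ ↦ ξ^{σ₀}(σ). -/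
/-!
Permuting the players by a permutation that preserves `sg0` is a symmetry of the chain started at
`sg0`: the transition probabilities and the Gibbs measure depend on configurations only through
data invariant under relabelling (`configP_permState`, `gibbs_permState`), and the initial point
mass is fixed. Hence both the law at time `t` and the Gibbs measure are invariant under this group
(`evolve_equiv`). Configurations with the same load matrix lie in one orbit of the group
(`exists_perm_of_ximat_eq`), so the difference of the two distributions is constant on the
fibres of the load matrix, and for such a difference the total variation distance is unchanged by passing to the
pushforwards (`tvDist_eq_tvDistOn`).
-/

open scoped BigOperators
open Filter MeasureTheory

noncomputable section

namespace CongestionPaper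

attribute [local instance 10] Classical.propDecidable

/-- If `mu - nu` is constant on the fibres of `m`, passing to the pushforwards under `m` loses no
total variation: the events maximizing the difference of probabilities can be taken to be
`{mu > nu}` or `{mu < nu}`, which are unions of fibres. -/
lemma tvDist_eq_tvDistOn {X Y : Type*} [Fintype X] (m : X -> Y) (mu nu : X -> Real)
    (h : ∀ x y, m x = m y -> mu x - nu x = mu y - nu y) :
    tvDist mu nu = tvDistOn m mu nu := by
  unfold tvDist tvDistOn
  have hbA : BddAbove (Set.range fun A : Finset X => |∑ x ∈ A, (mu x - nu x)|) :=
    (Set.finite_range _).bddAbove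
  have hle : ∀ B : Finset Y, |∑ x : X, (if m x ∈ B then mu x - nu x else 0)|
      ≤ ⨆ A : Finset X, |∑ x ∈ A, (mu x - nu x)| := by
    intro B
    rw [← Finset.sum_filter]
    exact le_ciSup hbA (Finset.univ.filter fun x => m x ∈ B)
  have hbB : BddAbove (Set.range fun B : Finset Y =>
      |∑ x : X, (if m x ∈ B then mu x - nu x else 0)|) :=
    ⟨_, by rintro _ ⟨B, rfl⟩; exact hle B⟩
  apply le_antisymm
  · apply ciSup_le
    intro A
    rcases le_total 0 (∑ x ∈ A, (mu x - nu x)) with hs | hs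
    · refine le_trans ?_ (le_ciSup hbB
        ((Finset.univ.filter fun x => 0 < mu x - nu x).image m))
      rw [abs_of_nonneg hs]
      refine le_trans ?_ (le_abs_self _)
      rw [← Finset.sum_filter_add_sum_filter_not Finset.univ (fun x => x ∈ A)]
      have h1 : ∀ x, (if m x ∈ (Finset.univ.filter fun x => 0 < mu x - nu x).image m
          then mu x - nu x else 0) = max (mu x - nu x) 0 := by
        intro x
        split_ifs with hx
        · obtain ⟨y, hy, hyx⟩ := Finset.mem_image.1 hx
          rw [max_eq_left]
          rw [← h y x hyx]
          exact (Finset.mem_filter.1 hy).2.le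
        · rw [max_eq_right]
          by_contra hc
          exact hx (Finset.mem_image.2 ⟨x, Finset.mem_filter.2
            ⟨Finset.mem_univ _, not_le.1 hc⟩, rfl⟩)
      simp only [h1]
      have h2 : (Finset.univ.filter fun x => x ∈ A) = A := by ext; simp
      rw [h2]
      have h3 : ∑ x ∈ A, (mu x - nu x) ≤ ∑ x ∈ A, max (mu x - nu x) 0 :=
        Finset.sum_le_sum fun x _ => le_max_left _ _
      have h4 : 0 ≤ ∑ x ∈ Finset.univ.filter (fun x => ¬ x ∈ A), max (mu x - nu x) 0 :=
        Finset.sum_nonneg fun x _ => le_max_right _ _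
      linarith
    · refine le_trans ?_ (le_ciSup hbB
        ((Finset.univ.filter fun x => mu x - nu x < 0).image m))
      rw [abs_of_nonpos hs]
      refine le_trans ?_ (neg_le_abs _)
      rw [neg_le_neg_iff]
      rw [← Finset.sum_filter_add_sum_filter_not Finset.univ (fun x => x ∈ A)]
      have h1 : ∀ x, (if m x ∈ (Finset.univ.filter fun x => mu x - nu x < 0).image m
          then mu x - nu x else 0) = min (mu x - nu x) 0 := by
        intro x
        split_ifs with hx
        · obtain ⟨y, hy, hyx⟩ := Finset.mem_image.1 hx
          rw [min_eq_left]
          rw [← h y x hyx]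
          exact (Finset.mem_filter.1 hy).2.le
        · rw [min_eq_right]
          by_contra hc
          exact hx (Finset.mem_image.2 ⟨x, Finset.mem_filter.2
            ⟨Finset.mem_univ _, not_le.1 hc⟩, rfl⟩)
      simp only [h1]
      have h2 : (Finset.univ.filter fun x => x ∈ A) = A := by ext; simp
      rw [h2]
      have h3 : ∑ x ∈ A, min (mu x - nu x) 0 ≤ ∑ x ∈ A, (mu x - nu x) :=
        Finset.sum_le_sum fun x _ => min_le_left _ _
      have h4 : ∑ x ∈ Finset.univ.filter (fun x => ¬ x ∈ A), min (mu x - nu x) 0 ≤ 0 :=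
        Finset.sum_nonpos fun x _ => min_le_right _ _
      linarith
  · exact ciSup_le hle

lemma evolve_equiv {X : Type*} [Fintype X] (p : X -> X -> Real) (mu : X -> Real) (e : X ≃ X)
    (hp : ∀ x y, p (e x) (e y) = p x y) (hmu : ∀ x, mu (e x) = mu x) (t : Nat) (x : X) :
    evolve p mu t (e x) = evolve p mu t x := by
  induction t generalizing x with
  | zero => exact hmu x
  | succ t ih =>
    simp only [evolve]
    rw [← Equiv.sum_comp e]
    exact Finset.sum_congr rfl fun y _ => by rw [ih, hp]

lemma xiCount_comp {Q n : Nat} (e : Equiv.Perm (Fin n)) (sg : Fin n -> Fin Q) (v : Fin Q) :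
    xiCount (sg ∘ e) v = xiCount sg v := by
  unfold xiCount
  exact Finset.card_equiv e (by simp)

/-- Relabelling of the players by a permutation `e`, acting on configurations by
`sigma ↦ sigma ∘ e`. -/
def permState (Q kap n : Nat) (e : Equiv.Perm (Fin n)) :
    ConfigState Q kap n ≃ ConfigState Q kap n where
  toFun sg := ⟨sg.1 ∘ e, fun v => by rw [xiCount_comp]; exact sg.2 v⟩
  invFun sg := ⟨sg.1 ∘ e.symm, fun v => by rw [xiCount_comp]; exact sg.2 v⟩
  left_inv sg := by ext i; simp
  right_inv sg := by ext i; simp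

lemma permState_val {Q kap n : Nat} (e : Equiv.Perm (Fin n)) (sg : ConfigState Q kap n) :
    (permState Q kap n e sg).1 = sg.1 ∘ e := rfl

lemma configP_permState {Q kap n : Nat} (e : Equiv.Perm (Fin n))
    (sg sg' : ConfigState Q kap n) :
    configP Q kap n (permState Q kap n e sg) (permState Q kap n e sg')
      = configP Q kap n sg sg' := by
  unfold configP
  simp only [permState_val, xiCount_comp, Function.comp_apply, EmbeddingLike.apply_eq_iff_eq]
  split_ifs with h
  · rw [Equiv.sum_comp e fun i => ((1 + kap - xiCount sg.1 (sg.1 i) : Nat) : Real)]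
  · congr 1
    conv_rhs => rw [← Equiv.sum_comp e]
    refine Finset.sum_congr rfl fun i _ => if_congr (and_congr Iff.rfl ?_) rfl rfl
    rw [← e.forall_congr_right (q := fun j => j ≠ e i → sg'.1 j = sg.1 j)]
    simp

lemma gibbs_permState {Q kap n : Nat} (e : Equiv.Perm (Fin n)) (sg : ConfigState Q kap n) :
    gibbs Q kap n (permState Q kap n e sg) = gibbs Q kap n sg := by
  unfold gibbs potF
  simp only [permState_val, xiCount_comp]

/-- Two configurations with the same load matrix relative to `sg0` differ by a permutation of the
players that preserves `sg0`. -/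
lemma exists_perm_of_ximat_eq {Q n : Nat} (sg0 sg sg' : Fin n -> Fin Q)
    (h : ximat sg0 sg = ximat sg0 sg') :
    ∃ e : Equiv.Perm (Fin n), sg0 ∘ e = sg0 ∧ sg' ∘ e = sg := by
  have hfib : ∀ c : Fin Q × Fin Q,
      Nonempty ({i // (sg0 i, sg i) = c} ≃ {i // (sg0 i, sg' i) = c}) := by
    rintro ⟨u, v⟩
    refine ⟨Fintype.equivOfCardEq ?_⟩
    have huv := congrFun (congrFun h u) v
    simp only [ximat] at huv
    simpa only [Fintype.card_subtype, Prod.mk.injEq] using huv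
  have E := fun c => (hfib c).some
  refine ⟨Equiv.ofFiberEquiv E, ?_, ?_⟩
  · funext i
    exact congrArg Prod.fst (Equiv.ofFiberEquiv_map E i)
  · funext i
    exact congrArg Prod.snd (Equiv.ofFiberEquiv_map E i)

/-- the total variation distance of the congestion dynamics to
stationarity equals that of the load matrix chain (Lemma 3.1). -/
theorem statement8 (Q : Nat) (hQ : 2 ≤ Q) (kap : Nat) (hkap : 0 < kap) (n : Nat) (hn : 0 < n)
    (sg0 : ConfigState Q kap n) (t : Nat) :
    tvDist (evolve (configP Q kap n) (delta sg0) t) (gibbs Q kap n)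
      = tvDistOn (fun sg : ConfigState Q kap n => ximat sg0.1 sg.1)
          (evolve (configP Q kap n) (delta sg0) t) (gibbs Q kap n) := by
  refine tvDist_eq_tvDistOn _ _ _ fun sg sg' hm => ?_
  obtain ⟨e, he0, he⟩ := exists_perm_of_ximat_eq sg0.1 sg.1 sg'.1 hm
  have hsg : sg = permState Q kap n e sg' := Subtype.ext he.symm
  have hfix : permState Q kap n e sg0 = sg0 := Subtype.ext he0
  rw [hsg, gibbs_permState, evolve_equiv _ _ _ (configP_permState e)]
  intro x
  unfold delta
  have hiff : permState Q kap n e x = sg0 ↔ x = sg0 := by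
    conv_lhs => rw [← hfix]
    exact (permState Q kap n e).apply_eq_iff_eq
  by_cases hx : x = sg0 <;> simp [hiff, hx, hfix]

end CongestionPaper
end
end
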